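/- arXiv:1510.03464 — 10 statements merged into one kernel-verified Lean document; each statement's English description precedes it below -/
import Mathlib

section
/- Let X be a finite quasigroup rack, i.e. a finite rack in which for all a, b ∈ X the equation a*x = b has a unique solution x ∈ X. Then for every n ≥ 1, the torsion subgroup of the rack homology group H_n^R(X) is annihilated by |X|. -/
/-- The `n`-th rack chain group: the free abelian group on `n`-tuples of `X`. -/
abbrev RackChain (X : Type) (n : ℕ) : Type := FreeAbelianGroup (Fin n → X)

/-- The face map `d_i^{(*_0)}` deleting the `i`-th entry (0-indexed). -/
def dZero {X : Type} (n : ℕ) (i : Fin (n + 1)) (x : Fin (n + 1) → X) :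
    Fin n → X :=
  fun j => if (j : ℕ) < (i : ℕ) then x j.castSucc else x j.succ

/-- The face map `d_i^{(*)}`: entries before position `i` are acted on by `x i`
and the `i`-th entry is deleted (0-indexed). -/
def dStar {X : Type} (op : X → X → X) (n : ℕ) (i : Fin (n + 1))
    (x : Fin (n + 1) → X) : Fin n → X :=
  fun j => if (j : ℕ) < (i : ℕ) then op (x j.castSucc) (x i) else x j.succ

/-- The rack boundary `∂_{n+1} : C_{n+1}^R(X) → C_n^R(X)`,
`∂(x) = Σ_{i=1}^{n+1} (-1)^i (d_i^{(*_0)} x - d_i^{(*)} x)` (with `i` 1-based). -/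
def rackBoundary {X : Type} (op : X → X → X) (n : ℕ) :
    RackChain X (n + 1) →+ RackChain X n :=
  FreeAbelianGroup.lift fun x =>
    ∑ i : Fin (n + 1), ((-1 : ℤ) ^ ((i : ℕ) + 1)) •
      (FreeAbelianGroup.of (dZero n i x) - FreeAbelianGroup.of (dStar op n i x))

/-- The group of rack `(n+1)`-cycles. -/
def rackCycles {X : Type} (op : X → X → X) (n : ℕ) :
    AddSubgroup (RackChain X (n + 1)) :=
  (rackBoundary op n).ker

/-- The group of rack `(n+1)`-boundaries, viewed inside the cycles. -/
def rackBoundaries {X : Type} (op : X → X → X) (n : ℕ) :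
    AddSubgroup (rackCycles op n) :=
  ((rackBoundary op (n + 1)).range).addSubgroupOf (rackCycles op n)

/-- The `(n+1)`-st rack homology group `H_{n+1}^R(X)` (so `n = 0` gives `H_1`). -/
def rackHomology {X : Type} (op : X → X → X) (n : ℕ) : Type :=
  rackCycles (X := X) op n ⧸ rackBoundaries op n

instance {X : Type} (op : X → X → X) (n : ℕ) :
    AddCommGroup (rackHomology op n) :=
  QuotientAddGroup.Quotient.addCommGroup _

/-- Insert `y` at position `j`, and overwrite all earlier entries by `a`. -/
def insAt {X : Type} {n : ℕ} (j : ℕ) (a y : X) (x : Fin n → X) : Fin (n + 1) → X :=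
  fun i => if h1 : (i : ℕ) < j then a else if h2 : (i : ℕ) = j then y else
    x ⟨(i : ℕ) - 1, by omega⟩

/-- Overwrite all entries before position `j` by `a`. -/
def owAt {X : Type} {n : ℕ} (j : ℕ) (a : X) (x : Fin n → X) : Fin n → X :=
  fun i => if (i : ℕ) < j then a else x i

lemma insAt_low {X : Type} (op : X → X → X) (hid : ∀ a, op a a = a) {n : ℕ} (j : ℕ) (a y : X)
    (x : Fin (n + 1) → X) (i : Fin (n + 2)) (hi : (i : ℕ) < j) :
    dZero (n + 1) i (insAt j a y x) = dStar op (n + 1) i (insAt j a y x) := by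
  funext m
  unfold dZero dStar
  by_cases hm : (m : ℕ) < i
  · have : (m : ℕ) < j := by omega
    simp [insAt, hm, hi, this, hid]
  · simp [hm]

lemma insAt_mid_zero {X : Type} {n : ℕ} (j : Fin (n + 2)) (a y : X)
    (x : Fin (n + 1) → X) :
    dZero (n + 1) j (insAt j a y x) = owAt j a x := by
  funext m
  unfold dZero owAt
  by_cases hm : (m : ℕ) < j
  · simp [insAt, hm]
  · have h1 : ¬ ((m : ℕ) + 1 < j) := by omega
    have h2 : ¬ ((m : ℕ) + 1 = j) := by omega
    simp [insAt, hm, h1, h2]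

lemma insAt_mid_star {X : Type} (op : X → X → X) {n : ℕ} (j : Fin (n + 2)) (a y : X)
    (x : Fin (n + 1) → X) :
    dStar op (n + 1) j (insAt j a y x) = owAt j (op a y) x := by
  funext m
  unfold dStar owAt
  by_cases hm : (m : ℕ) < j
  · simp [insAt, hm]
  · have h1 : ¬ ((m : ℕ) + 1 < j) := by omega
    have h2 : ¬ ((m : ℕ) + 1 = j) := by omega
    simp [insAt, hm, h1, h2]

lemma insAt_high_zero {X : Type} {n : ℕ} (j : ℕ) (a y : X)
    (x : Fin (n + 1) → X) (k : Fin (n + 1)) (hk : j ≤ k) :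
    dZero (n + 1) k.succ (insAt j a y x) = insAt j a y (dZero n k x) := by
  funext m
  unfold dZero insAt
  simp only [Fin.val_succ, Fin.val_castSucc]
  split_ifs <;> first | rfl | omega | (congr 1; ext; simp; try omega)

lemma insAt_high_star {X : Type} (op : X → X → X) {n : ℕ} (j : ℕ) (a y : X)
    (x : Fin (n + 1) → X) (k : Fin (n + 1)) (hk : j ≤ k) :
    dStar op (n + 1) k.succ (insAt j a y x)
      = insAt j (op a (x k)) (op y (x k)) (dStar op n k x) := by
  have e : insAt j a y x k.succ = x k := by
    have h1 : ¬ ((k : ℕ) + 1 < j) := by omega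
    have h2 : ¬ ((k : ℕ) + 1 = j) := by omega
    simp [insAt, h1, h2]
  funext m
  unfold dStar
  rw [e]
  unfold insAt
  simp only [Fin.val_succ, Fin.val_castSucc]
  split_ifs <;> first | rfl | omega | (congr 1; ext; simp; try omega)

/-- The homotopy. -/
noncomputable def hmt (X : Type) [Fintype X] (j s n : ℕ) (x : Fin n → X) : RackChain X (n + 1) :=
  if hs : s < n then ∑ y : X, FreeAbelianGroup.of (insAt j (x ⟨s, hs⟩) y x) else 0

lemma hmt_low {X : Type} [Fintype X] (op : X → X → X) {n : ℕ} (j s : ℕ) (hsj : s ≤ j)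
    (hjs : j ≤ s + 1) (x : Fin (n + 1) → X) (k : Fin (n + 1)) (hk : k ≤ s) :
    hmt X j s n (dZero n k x) = hmt X j s n (dStar op n k x) := by
  unfold hmt
  split_ifs with hs
  · refine Finset.sum_congr rfl fun y _ => ?_
    congr 1
    funext m
    have h0 : ¬ (s < (k : ℕ)) := by omega
    simp only [insAt, dZero, dStar, h0, if_false]
    split_ifs <;> first | rfl | omega
  · rfl

lemma term_eq {X : Type} [Fintype X] (op : X → X → X) (hid : ∀ a, op a a = a)
    (hbij : ∀ b : X, Function.Bijective fun x => op x b) {n : ℕ}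
    (j : Fin (n + 2)) (s : Fin (n + 1)) (hsj : (s : ℕ) ≤ j) (hjs : (j : ℕ) ≤ s + 1)
    (x : Fin (n + 1) → X) (k : Fin (n + 1)) :
    ((-1 : ℤ) ^ (((j.succAbove k : Fin (n + 2)) : ℕ) + 1)) • ∑ y : X,
      (FreeAbelianGroup.of (dZero (n + 1) (j.succAbove k) (insAt j (x s) y x))
        - FreeAbelianGroup.of (dStar op (n + 1) (j.succAbove k) (insAt j (x s) y x)))
    = - (((-1 : ℤ) ^ ((k : ℕ) + 1)) •
      (hmt X j s n (dZero n k x) - hmt X j s n (dStar op n k x))) := by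
  by_cases hkj : (k : ℕ) < j
  · have hc : j.succAbove k = k.castSucc :=
      Fin.succAbove_of_castSucc_lt _ _ (by simpa [Fin.lt_def] using hkj)
    rw [hmt_low op j s hsj hjs x k (by omega), hc]
    simp [insAt_low op hid (j : ℕ) (x s) _ x k.castSucc (by simpa using hkj)]
  · have hkj' : (j : ℕ) ≤ k := by omega
    have hc : j.succAbove k = k.succ :=
      Fin.succAbove_of_le_castSucc _ _ (by simpa [Fin.le_def] using hkj')
    rw [hc]
    simp only [insAt_high_zero (j : ℕ) _ _ x k hkj', insAt_high_star op (j : ℕ) _ _ x k hkj']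
    rw [Finset.sum_sub_distrib]
    have hre := (hbij (x k)).sum_comp (fun y => FreeAbelianGroup.of
      (insAt (j : ℕ) (op (x s) (x k)) y (dStar op n k x)))
    rw [hre]
    by_cases hks : (k : ℕ) ≤ s
    · have hk : k = s := by ext; omega
      subst hk
      have hd : ∀ y, insAt (j : ℕ) (x k) y (dZero n k x)
          = insAt (j : ℕ) (x k) y (dStar op n k x) := by
        intro y
        funext m
        simp only [insAt, dZero, dStar]
        split_ifs <;> first | rfl | omega
      rw [hmt_low op j k hsj hjs x k le_rfl, hid]
      simp [hd]
    · have hs : (s : ℕ) < n := by omega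
      have hsk : (s : ℕ) < k := by omega
      have e1 : dZero n k x ⟨s, hs⟩ = x s := by simp [dZero, hsk]
      have e2 : dStar op n k x ⟨s, hs⟩ = op (x s) (x k) := by simp [dStar, hsk]
      simp only [hmt, hs, dif_pos, e1, e2, Fin.val_succ]
      rw [pow_succ _ ((k : ℕ) + 1)]
      simp

lemma boundary_hmt {X : Type} [Fintype X] (op : X → X → X) (hid : ∀ a, op a a = a)
    (hbij : ∀ b : X, Function.Bijective fun x => op x b)
    (hqg : ∀ a : X, Function.Bijective fun x => op a x) {n : ℕ}
    (j : Fin (n + 2)) (s : Fin (n + 1)) (hsj : (s : ℕ) ≤ j) (hjs : (j : ℕ) ≤ s + 1)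
    (x : Fin (n + 1) → X) :
    rackBoundary op (n + 1) (hmt X j s (n + 1) x) =
      ((-1 : ℤ) ^ ((j : ℕ) + 1)) • (Fintype.card X • FreeAbelianGroup.of (owAt j (x s) x)
        - ∑ y : X, FreeAbelianGroup.of (owAt j y x))
      - FreeAbelianGroup.lift (hmt X j s n) (rackBoundary op n (FreeAbelianGroup.of x)) := by
  have hL : rackBoundary op (n + 1) (hmt X j s (n + 1) x) =
      ∑ i : Fin (n + 2), ((-1 : ℤ) ^ ((i : ℕ) + 1)) • ∑ y : X,
      (FreeAbelianGroup.of (dZero (n + 1) i (insAt j (x s) y x))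
        - FreeAbelianGroup.of (dStar op (n + 1) i (insAt j (x s) y x))) := by
    simp only [hmt, s.2, dif_pos, map_sum, rackBoundary, FreeAbelianGroup.lift_apply_of]
    rw [Finset.sum_comm]
    simp only [Finset.smul_sum]
  rw [hL, Fin.sum_univ_succAbove _ j, Finset.sum_congr rfl
    (fun k _ => term_eq op hid hbij j s hsj hjs x k)]
  rw [Finset.sum_neg_distrib, ← sub_eq_add_neg]
  congr 1
  · congr 1
    simp only [insAt_mid_zero, insAt_mid_star]
    rw [Finset.sum_sub_distrib, (hqg (x s)).sum_comp (fun y => FreeAbelianGroup.of (owAt j y x))]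
    simp
  · simp only [rackBoundary, FreeAbelianGroup.lift_apply_of, map_sum, map_zsmul, map_sub]

lemma boundary_hmt' {X : Type} [Fintype X] (op : X → X → X) (hid : ∀ a, op a a = a)
    (hbij : ∀ b : X, Function.Bijective fun x => op x b)
    (hqg : ∀ a : X, Function.Bijective fun x => op a x) {n : ℕ}
    (j : Fin (n + 2)) (s : Fin (n + 1)) (hsj : (s : ℕ) ≤ j) (hjs : (j : ℕ) ≤ s + 1)
    (c : RackChain X (n + 1)) (hc : rackBoundary op n c = 0) :
    Fintype.card X • FreeAbelianGroup.map (fun x => owAt j (x s) x) c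
      - FreeAbelianGroup.lift (fun x : Fin (n + 1) → X => ∑ y : X,
          FreeAbelianGroup.of (owAt j y x)) c ∈ (rackBoundary op (n + 1)).range := by
  have key : (rackBoundary op (n + 1)).comp (FreeAbelianGroup.lift (hmt X j s (n + 1))) =
      ((-1 : ℤ) ^ ((j : ℕ) + 1)) • (Fintype.card X •
        FreeAbelianGroup.map (fun x : Fin (n + 1) → X => owAt j (x s) x)
        - FreeAbelianGroup.lift (fun x : Fin (n + 1) → X => ∑ y : X,
          FreeAbelianGroup.of (owAt j y x)))
      - (FreeAbelianGroup.lift (hmt X j s n)).comp (rackBoundary op n) := by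
    apply FreeAbelianGroup.lift_ext
    intro x
    simpa using boundary_hmt op hid hbij hqg j s hsj hjs x
  have k2 := DFunLike.congr_fun key c
  simp only [AddMonoidHom.comp_apply, AddMonoidHom.sub_apply, AddMonoidHom.smul_apply, hc,
    map_zero, sub_zero] at k2
  refine ⟨((-1 : ℤ) ^ ((j : ℕ) + 1)) • FreeAbelianGroup.lift (hmt X j s (n + 1)) c, ?_⟩
  rw [map_zsmul, k2, smul_smul, ← mul_pow]
  simp

lemma all_steps {X : Type} [Fintype X] (op : X → X → X) (hid : ∀ a, op a a = a)
    (hbij : ∀ b : X, Function.Bijective fun x => op x b)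
    (hqg : ∀ a : X, Function.Bijective fun x => op a x) {n : ℕ}
    (c : RackChain X (n + 1)) (hc : rackBoundary op n c = 0) (j : ℕ) (hj : j < n + 1) :
    Fintype.card X • c - Fintype.card X •
      FreeAbelianGroup.map (fun x : Fin (n + 1) → X => owAt (j + 1) (x ⟨j, hj⟩) x) c
      ∈ (rackBoundary op (n + 1)).range := by
  induction j with
  | zero =>
    have : (fun x : Fin (n + 1) → X => owAt (0 + 1) (x ⟨0, hj⟩) x) = id := by
      funext x m
      simp only [owAt, id]
      split_ifs with h
      · congr 1; ext; simp; omega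
      · rfl
    rw [this, FreeAbelianGroup.map_id]
    simp
  | succ j ih =>
    have h0 := ih (by omega)
    have h1 := boundary_hmt' op hid hbij hqg ⟨j + 1, by omega⟩ ⟨j, by omega⟩
      (by simp) (by simp) c hc
    have h2 := boundary_hmt' op hid hbij hqg ⟨j + 1, by omega⟩ ⟨j + 1, hj⟩
      (by simp) (by simp) c hc
    have : (fun x : Fin (n + 1) → X => owAt (j + 1 + 1) (x ⟨j + 1, hj⟩) x)
        = fun x => owAt (j + 1) (x ⟨j + 1, hj⟩) x := by
      funext x m
      simp only [owAt]
      split_ifs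
      · rfl
      · congr 1; ext; simp; omega
      · omega
      · rfl
    rw [this]
    have h3 := add_mem h0 (sub_mem h1 h2)
    convert h3 using 1
    abel

/-- For a finite quasigroup rack `X`, the torsion subgroup of
every rack homology group `H_n^R(X)` (`n ≥ 1`) is annihilated by `|X|`. -/
theorem quasigroup_rack_torsion_annihilated
    {X : Type} [Fintype X] (op : X → X → X)
    (hbij : ∀ b : X, Function.Bijective fun x => op x b)
    (hdist : ∀ a b c : X, op (op a b) c = op (op a c) (op b c))
    (hqg : ∀ a b : X, ∃! x : X, op a x = b) :
    ∀ n : ℕ, ∀ h : rackHomology op n,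
      (∃ k : ℕ, k ≠ 0 ∧ k • h = 0) → Fintype.card X • h = 0 := by
  intro n h ⟨k, hk, hkh⟩
  have hid : ∀ a, op a a = a := by
    intro b
    obtain ⟨a, ha⟩ := (hbij b).2 b
    simp only at ha
    have h1 := hdist a b b
    rw [ha] at h1
    exact (hqg b (op b b)).unique h1.symm rfl
  have hq : ∀ a : X, Function.Bijective fun x => op a x :=
    fun a => (Function.bijective_iff_existsUnique _).2 (hqg a)
  obtain ⟨⟨c, hc⟩, rfl⟩ := QuotientAddGroup.mk_surjective h
  have mem : ∀ m : ℕ, m • (QuotientAddGroup.mk (⟨c, hc⟩ : rackCycles op n) : rackHomology op n) = 0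
      ↔ m • c ∈ (rackBoundary op (n + 1)).range := by
    intro m
    exact (QuotientAddGroup.eq_zero_iff (N := rackBoundaries op n) (m • (⟨c, hc⟩ : rackCycles op n)))
  have hc' : rackBoundary op n c = 0 := hc
  refine (mem _).2 ?_
  replace hkh := (mem k).1 hkh
  -- augmentation
  let ε : ∀ m : ℕ, RackChain X m →+ ℤ := fun m => FreeAbelianGroup.lift fun _ => 1
  have hε : (ε (n + 1)).comp (rackBoundary op (n + 1)) = 0 := by
    apply FreeAbelianGroup.lift_ext
    intro x
    simp [ε, rackBoundary]
  have hεc : ε (n + 1) c = 0 := by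
    obtain ⟨d, hd⟩ := hkh
    have := DFunLike.congr_fun hε d
    simp only [AddMonoidHom.comp_apply, hd, map_nsmul, AddMonoidHom.zero_apply] at this
    simpa [hk] using this
  have h1 := all_steps op hid hbij hq c hc' n (by omega)
  have h2 := boundary_hmt' op hid hbij hq ⟨n + 1, by omega⟩ ⟨n, by omega⟩
      (by simp) (by simp) c hc'
  have h3 : FreeAbelianGroup.lift (fun x : Fin (n + 1) → X => ∑ y : X,
          FreeAbelianGroup.of (owAt (n + 1) y x)) c = 0 := by
    have e : FreeAbelianGroup.lift (fun x : Fin (n + 1) → X => ∑ y : X,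
          FreeAbelianGroup.of (owAt (n + 1) y x)) =
        (zmultiplesHom (RackChain X (n + 1))
          (∑ y : X, FreeAbelianGroup.of (fun _ : Fin (n + 1) => y))).comp (ε (n + 1)) := by
      apply FreeAbelianGroup.lift_ext
      intro x
      have ho : ∀ y, owAt (n + 1) y x = fun _ => y := by
        intro y
        funext m
        simp only [owAt, m.2, if_true]
      simp [ε, ho]
    rw [e, AddMonoidHom.comp_apply, hεc, map_zero]
  simp only [h3, sub_zero] at h2
  have h4 := add_mem h1 h2
  simpa using h4
end

section
/- Let X be a finite m-almost quasigroup quandle with m ≤ 3. Then for every a ∈ X the stabilizer S_a is a trivial subquandle of X, i.e. x*y = x for all x, y ∈ S_a. -/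
/-- In a finite `m`-almost quasigroup quandle with `m ≤ 3`, every
stabilizer `S_a` is a trivial subquandle: `x * y = x` for all `x, y ∈ S_a`. -/
theorem mAQ_le_three_stabilizer_trivial
    {X : Type*} [Fintype X] [DecidableEq X] (op : X → X → X) (m : ℕ)
    (hm : 1 ≤ m)
    (hidem : ∀ a : X, op a a = a)
    (hbij : ∀ b : X, Function.Bijective fun x => op x b)
    (hdist : ∀ a b c : X, op (op a b) c = op (op a c) (op b c))
    (hstab : ∀ a : X, (Finset.univ.filter fun x => op a x = a).card = m)
    (hsol : ∀ a b : X, op a b ≠ a → ∃! x : X, op a x = b)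
    (hm3 : m ≤ 3) :
    ∀ a x y : X, op a x = a → op a y = a → op x y = x := by
  -- `x ↦ op a x` maps the complement of `S_a` to itself
  have key : ∀ a x : X, op a (op a x) = a → op a x = a := by
    intro a x h
    by_contra hx
    have h1 : ∀ b : {b : X // op a b ≠ a}, ∃ x : {b : X // op a b ≠ a}, op a x.1 = b.1 := by
      rintro ⟨b, hb⟩
      obtain ⟨z, hz, -⟩ := hsol a b hb
      refine ⟨⟨z, fun hza => hb ?_⟩, hz⟩
      have hab : b = a := hz.symm.trans hza
      rw [hab]
      exact hidem a
    choose g hg using h1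
    have ginj : Function.Injective g := by
      intro b c hbc
      apply Subtype.ext
      rw [← hg b, ← hg c, hbc]
    obtain ⟨b, hb⟩ := (Finite.injective_iff_surjective.mp ginj) ⟨x, hx⟩
    have h2 := hg b
    rw [hb] at h2
    apply b.2
    rw [← h2]
    exact h
  have inj : ∀ x y b : X, op x b = op y b → x = y := fun x y b h => (hbij b).1 h
  have closed : ∀ a x y : X, op a x = a → op a y = a → op a (op x y) = a := by
    intro a x y hx hy
    have h := hdist a x y
    rw [hx, hy] at h
    exact h.symm
  have four : ∀ a x y z : X, op a x = a → op a y = a → op a z = a →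
      a ≠ x → a ≠ y → a ≠ z → x ≠ y → x ≠ z → y ≠ z → False := by
    intro a x y z hx hy hz n1 n2 n3 n4 n5 n6
    have hsub : ({a, x, y, z} : Finset X) ⊆ Finset.univ.filter fun x => op a x = a := by
      intro w hw
      simp only [Finset.mem_insert, Finset.mem_singleton] at hw
      simp only [Finset.mem_filter, Finset.mem_univ, true_and]
      rcases hw with rfl | rfl | rfl | rfl
      · exact hidem _
      · exact hx
      · exact hy
      · exact hz
    have hc := Finset.card_le_card hsub
    rw [hstab a] at hc
    have h4 : ({a, x, y, z} : Finset X).card = 4 := by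
      simp [n1, n2, n3, n4, n5, n6]
    omega
  have main1 : ∀ a x y : X, op a x = a → op a y = a → y ≠ a → op x y = x := by
    intro a x y hx hy hya
    by_contra hne
    have hxa : a ≠ x := by
      rintro rfl
      exact hne hy
    have hxy : x ≠ y := by
      rintro rfl
      exact hne (hidem _)
    refine four a x y (op x y) hx hy (closed a x y hx hy) hxa hya.symm ?_ hxy
      (fun h => hne h.symm) ?_
    · intro h
      exact hxa (inj a x y (hy.trans h))
    · intro h
      exact hxy (inj x y y (h.symm.trans (hidem y).symm))
  intro a x y hx hy
  by_cases hya : y = a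
  · subst hya
    by_cases hz : op x y = y
    · rw [hz]
      exact inj y x y ((hidem y).trans hz.symm)
    · exact key x y (main1 y x (op x y) hx (closed y x y hx hy) hz)
  · exact main1 a x y hx hy hya
end

section
/- Let X be a nontrivial m-almost quasigroup quandle (i.e. there exist a, b ∈ X with a*b ≠ a) such that for every a ∈ X the stabilizer S_a is a trivial subquandle of X. Then X is connected; in fact, for any a, b ∈ X there exist y_1, y_2 ∈ X with (a*y_1)*y_2 = b. -/
/-- A nontrivial `m`-almost quasigroup quandle all of whose
stabilizers are trivial subquandles is connected (the group of permutations
generated by the right translations acts transitively); in fact any `b` can be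
reached from any `a` in two steps: `(a * y₁) * y₂ = b`. -/
theorem mAQ_trivial_stabilizers_connected
    {X : Type*} (op : X → X → X) (m : ℕ)
    (hm : 1 ≤ m)
    (hidem : ∀ a : X, op a a = a)
    (hbij : ∀ b : X, Function.Bijective fun x => op x b)
    (hdist : ∀ a b c : X, op (op a b) c = op (op a c) (op b c))
    (hstab : ∀ a : X, Set.ncard {x : X | op a x = a} = m)
    (hsol : ∀ a b : X, op a b ≠ a → ∃! x : X, op a x = b)
    (hnontriv : ∃ a b : X, op a b ≠ a)
    (htriv : ∀ a x y : X, op a x = a → op a y = a → op x y = x) :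
    (∀ a b : X, ∃ g ∈ Subgroup.closure {g : Equiv.Perm X | ∃ c : X, ∀ x : X, g x = op x c},
      g a = b) ∧
    (∀ a b : X, ∃ y₁ y₂ : X, op (op a y₁) y₂ = b) := by
  have hsymm : ∀ a x : X, op a x = a → op x a = x := fun a x h =>
    htriv a x a h (hidem a)
  have key : ∀ a b : X, ∃ y₁ y₂ : X, op (op a y₁) y₂ = b := by
    intro a b
    by_cases hab : op a b = a
    · have hc : ∃ c, op a c ≠ a := by
        by_contra hcon
        push Not at hcon
        obtain ⟨u, v, huv⟩ := hnontriv
        exact huv (htriv a u v (hcon u) (hcon v))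
      obtain ⟨c, hc⟩ := hc
      have hcb : op c b ≠ c := by
        intro h
        exact hc (htriv b a c (hsymm a b hab) (hsymm c b h))
      obtain ⟨y₁, h₁, _⟩ := hsol a c hc
      obtain ⟨y₂, h₂, _⟩ := hsol c b hcb
      exact ⟨y₁, y₂, by rw [h₁, h₂]⟩
    · obtain ⟨y, hy, _⟩ := hsol a b hab
      exact ⟨y, b, by rw [hy, hidem]⟩
  refine ⟨fun a b => ?_, key⟩
  obtain ⟨y₁, y₂, h⟩ := key a b
  refine ⟨Equiv.ofBijective _ (hbij y₂) * Equiv.ofBijective _ (hbij y₁),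
    Subgroup.mul_mem _ (Subgroup.subset_closure ⟨y₂, fun x => rfl⟩)
      (Subgroup.subset_closure ⟨y₁, fun x => rfl⟩), h⟩
end

section
/- Let X be an m-almost quasigroup quandle and a ∈ X. Then the stabilizer S_a is a trivial subquandle of X (i.e. x*y = x for all x, y ∈ S_a) if and only if S_b = S_a for every b ∈ S_a. -/
/-- In an `m`-almost quasigroup quandle, the stabilizer `S_a` is a
trivial subquandle if and only if `S_b = S_a` for every `b ∈ S_a`. -/
theorem mAQ_stabilizer_trivial_iff
    {X : Type*} (op : X → X → X) (m : ℕ)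
    (hm : 1 ≤ m)
    (hidem : ∀ a : X, op a a = a)
    (hbij : ∀ b : X, Function.Bijective fun x => op x b)
    (hdist : ∀ a b c : X, op (op a b) c = op (op a c) (op b c))
    (hstab : ∀ a : X, Set.ncard {x : X | op a x = a} = m)
    (hsol : ∀ a b : X, op a b ≠ a → ∃! x : X, op a x = b) :
    ∀ a : X,
      ((∀ x ∈ {x : X | op a x = a}, ∀ y ∈ {x : X | op a x = a}, op x y = x) ↔
        (∀ b : X, op a b = a → {x : X | op b x = b} = {x : X | op a x = a})) := by
  intro a
  constructor
  · intro h b hb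
    have hfin : {x : X | op b x = b}.Finite :=
      Set.finite_of_ncard_pos (by rw [hstab b]; omega)
    have hsub : {x : X | op a x = a} ⊆ {x : X | op b x = b} := fun y hy => h b hb y hy
    exact (Set.eq_of_subset_of_ncard_le hsub
      (by rw [hstab a, hstab b]) hfin).symm
  · intro h x hx y hy
    have hy' : y ∈ {z : X | op x z = x} := by
      rw [h x hx]
      exact hy
    exact hy'
end

section
/- Let (X,*) be a finite nonempty quasigroup quandle and let T_n = {1,…,n} with n ≥ 1. Define an operation ◦ on X × T_n by (s,a) ◦ (t,b) = (s*t, a) if a = b, and (s,a) ◦ (t,b) = (s,a) if a ≠ b. Then (X × T_n, ◦) is a quandle, and it is an ((n−1)|X|+1)-almost quasigroup quandle. -/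
/-- The operation of the dynamical cocycle extension `X ×_α T_n`:
`(s,a) ◦ (t,b) = (s*t, a)` if `a = b`, and `(s,a)` otherwise. -/
def prodOp {X : Type*} (op : X → X → X) (n : ℕ)
    (p q : X × Fin n) : X × Fin n :=
  if p.2 = q.2 then (op p.1 q.1, p.2) else p

/-- For a finite nonempty quasigroup quandle `X` and `n ≥ 1`, the
operation `◦` on `X × T_n` makes it a quandle, and it is an
`((n-1)|X|+1)`-almost quasigroup quandle. -/
theorem prod_quasigroup_trivial_is_mAQ
    {X : Type*} [Fintype X] [DecidableEq X] [Nonempty X] (op : X → X → X)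
    (hidem : ∀ a : X, op a a = a)
    (hbij : ∀ b : X, Function.Bijective fun x => op x b)
    (hdist : ∀ a b c : X, op (op a b) c = op (op a c) (op b c))
    (hqg : ∀ a b : X, ∃! x : X, op a x = b)
    (n : ℕ) (hn : 1 ≤ n) :
    (∀ p : X × Fin n, prodOp op n p p = p) ∧
    (∀ q : X × Fin n, Function.Bijective fun p => prodOp op n p q) ∧
    (∀ p q r : X × Fin n,
      prodOp op n (prodOp op n p q) r
        = prodOp op n (prodOp op n p r) (prodOp op n q r)) ∧
    (∀ p : X × Fin n,
      (Finset.univ.filter fun q => prodOp op n p q = p).card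
        = (n - 1) * Fintype.card X + 1) ∧
    (∀ p q : X × Fin n, prodOp op n p q ≠ p → ∃! r : X × Fin n, prodOp op n p r = q) := by
  have hs : ∀ s t : X, op s t = s ↔ t = s := by
    intro s t
    constructor
    · intro h
      exact (hqg s s).unique h (hidem s)
    · rintro rfl
      exact hidem t
  refine ⟨?_, ?_, ?_, ?_, ?_⟩
  · rintro ⟨s, a⟩
    simp [prodOp, hidem]
  · rintro ⟨t, b⟩
    apply Function.Injective.bijective_of_finite
    rintro ⟨s, a⟩ ⟨s', a'⟩ h
    have hi := (hbij t).1
    simp only [prodOp] at h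
    by_cases h1 : a = b <;> by_cases h2 : a' = b
    · simp only [h1, h2, if_true, Prod.mk.injEq, and_true] at h
      have := hi h
      simp [this, h1, h2]
    · simp only [h1, h2, if_true, if_false, Prod.mk.injEq] at h
      exact absurd h.2.symm h2
    · simp only [h1, h2, if_true, if_false, Prod.mk.injEq] at h
      exact h.2.elim
    · simpa only [h1, h2, if_false] using h
  · rintro ⟨s, a⟩ ⟨t, b⟩ ⟨u, c⟩
    by_cases h1 : a = b
    · subst h1
      by_cases h2 : a = c
      · subst h2
        simp only [prodOp, if_true]
        rw [hdist]
      · simp [prodOp, h2]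
    · by_cases h2 : a = c
      · subst h2
        simp [prodOp, h1, Ne.symm h1]
      · by_cases h3 : b = c
        · subst h3
          simp [prodOp, h1]
        · simp [prodOp, h1, h2, h3]
  · rintro ⟨s, a⟩
    have : (Finset.univ.filter fun q => prodOp op n (s, a) q = (s, a))
        = insert (s, a) ((Finset.univ : Finset X) ×ˢ (Finset.univ.erase a)) := by
      ext ⟨t, b⟩
      by_cases h : a = b
      · subst h
        simp [prodOp, hs]
      · simp [prodOp, h, Ne.symm h]
    rw [this, Finset.card_insert_of_notMem (by simp), Finset.card_product,
      Finset.card_erase_of_mem (Finset.mem_univ a)]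
    simp [mul_comm]
  · rintro ⟨s, a⟩ ⟨t, b⟩ h
    by_cases hab : a = b
    · subst hab
      have hts : t ≠ s := by
        simpa [prodOp, hs] using h
      obtain ⟨x, hx, hu⟩ := hqg s t
      refine ⟨(x, a), by simp [prodOp, hx], ?_⟩
      rintro ⟨y, c⟩ hy
      by_cases hc : a = c
      · subst hc
        simp only [prodOp, if_true, Prod.mk.injEq, and_true] at hy
        rw [hu y hy]
      · simp only [prodOp, hc, if_false, Prod.mk.injEq, and_true] at hy
        exact absurd hy.symm hts
    · simp [prodOp, hab] at h
end

section
/- Let n ≥ 2 and let Q be the set of transpositions (2-cycles) in the symmetric group S_n with the conjugation operation σ * τ = τ⁻¹στ. Then Q is a quandle; for transpositions σ = (i,j) and τ = (k,l) one has σ * τ = σ if and only if {i,j} = {k,l} or {i,j} ∩ {k,l} = ∅; and Q is an (C(n−2,2)+1)-almost quasigroup quandle, where C(n−2,2) denotes the binomial coefficient (n−2 choose 2). -/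
/-- The conjugation quandle operation `σ * τ = τ⁻¹στ` on the set of
transpositions of `S_n`. -/
def transpositionConjOp (n : ℕ)
    (σ τ : {f : Equiv.Perm (Fin n) // f.IsSwap}) :
    {f : Equiv.Perm (Fin n) // f.IsSwap} :=
  ⟨τ.1⁻¹ * σ.1 * τ.1, by
    obtain ⟨x, y, hxy, hσ⟩ := σ.2
    refine ⟨τ.1⁻¹ x, τ.1⁻¹ y, fun h => hxy (τ.1⁻¹.injective h), ?_⟩
    rw [hσ, Equiv.swap_apply_apply, inv_inv]⟩

theorem swap_eq_swap_iff_aux {n : ℕ} (a b c d : Fin n) (hab : a ≠ b) :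
    Equiv.swap a b = Equiv.swap c d ↔ (a = c ∧ b = d) ∨ (a = d ∧ b = c) := by
  constructor
  · intro h
    have h1 := congrArg (fun f => f a) h
    simp only [Equiv.swap_apply_left] at h1
    rw [Equiv.swap_apply_def] at h1
    grind
  · rintro (⟨rfl, rfl⟩ | ⟨rfl, rfl⟩)
    · rfl
    · exact Equiv.swap_comm _ _

theorem swap_conj_aux {n : ℕ} (i j k l : Fin n) :
    (Equiv.swap k l)⁻¹ * Equiv.swap i j * Equiv.swap k l
      = Equiv.swap (Equiv.swap k l i) (Equiv.swap k l j) := by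
  rw [Equiv.swap_apply_apply, Equiv.swap_inv]

theorem conj_iff_aux {n : ℕ} (i j k l : Fin n) (hij : i ≠ j) (hkl : k ≠ l) :
    (Equiv.swap k l)⁻¹ * Equiv.swap i j * Equiv.swap k l = Equiv.swap i j ↔
      ((i = k ∧ j = l) ∨ (i = l ∧ j = k)) ∨ (i ≠ k ∧ i ≠ l ∧ j ≠ k ∧ j ≠ l) := by
  rw [swap_conj_aux, swap_eq_swap_iff_aux _ _ _ _ (fun h => hij ((Equiv.swap k l).injective h))]
  simp only [Equiv.swap_apply_def]
  grind

theorem conj_unique_aux {n : ℕ} (i j k l : Fin n) (hij : i ≠ j) (hkl : k ≠ l)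
    (h : ¬ (((i = k ∧ j = l) ∨ (i = l ∧ j = k)) ∨ (i ≠ k ∧ i ≠ l ∧ j ≠ k ∧ j ≠ l))) :
    ∃ a b : Fin n, a ≠ b ∧ ∀ c d : Fin n, c ≠ d →
      ((Equiv.swap c d)⁻¹ * Equiv.swap i j * Equiv.swap c d = Equiv.swap k l ↔
        Equiv.swap c d = Equiv.swap a b) := by
  have key : ∀ c d : Fin n, c ≠ d → ∀ a b : Fin n,
      (((Equiv.swap c d)⁻¹ * Equiv.swap i j * Equiv.swap c d = Equiv.swap k l ↔
        Equiv.swap c d = Equiv.swap a b) ↔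
      (((Equiv.swap c d i = k ∧ Equiv.swap c d j = l) ∨
        (Equiv.swap c d i = l ∧ Equiv.swap c d j = k)) ↔
        ((c = a ∧ d = b) ∨ (c = b ∧ d = a)))) := by
    intro c d hcd a b
    rw [swap_conj_aux, swap_eq_swap_iff_aux _ _ _ _ (fun h => hij ((Equiv.swap c d).injective h)),
      swap_eq_swap_iff_aux _ _ _ _ hcd]
  have cases4 : (i = k ∧ j ≠ l) ∨ (i = l ∧ j ≠ k) ∨ (j = k ∧ i ≠ l) ∨ (j = l ∧ i ≠ k) := by
    grind
  rcases cases4 with ⟨h1, h2⟩ | ⟨h1, h2⟩ | ⟨h1, h2⟩ | ⟨h1, h2⟩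
  · refine ⟨j, l, h2, fun c d hcd => (key c d hcd _ _).2 ?_⟩
    simp only [Equiv.swap_apply_def]
    grind
  · refine ⟨j, k, h2, fun c d hcd => (key c d hcd _ _).2 ?_⟩
    simp only [Equiv.swap_apply_def]
    grind
  · refine ⟨i, l, h2, fun c d hcd => (key c d hcd _ _).2 ?_⟩
    simp only [Equiv.swap_apply_def]
    grind
  · refine ⟨i, k, h2, fun c d hcd => (key c d hcd _ _).2 ?_⟩
    simp only [Equiv.swap_apply_def]
    grind

theorem ncard_aux {n : ℕ} (σ : {f : Equiv.Perm (Fin n) // f.IsSwap}) :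
    Set.ncard {τ : {f : Equiv.Perm (Fin n) // f.IsSwap} | transpositionConjOp n σ τ = σ}
      = Nat.choose (n - 2) 2 + 1 := by
  obtain ⟨s, i, j, hij, rfl⟩ := σ
  let F : {f : Equiv.Perm (Fin n) // f.IsSwap} → Finset (Fin n) := fun τ => τ.1.support
  have hF : Function.Injective F := by
    rintro ⟨_, a, b, hab, rfl⟩ ⟨_, c, d, hcd, rfl⟩ h
    simp only [F, Equiv.Perm.support_swap hab, Equiv.Perm.support_swap hcd] at h
    apply Subtype.ext
    show Equiv.swap a b = Equiv.swap c d
    rw [swap_eq_swap_iff_aux _ _ _ _ hab]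
    have h1 : a ∈ ({c, d} : Finset (Fin n)) := by rw [← h]; simp
    have h2 : b ∈ ({c, d} : Finset (Fin n)) := by rw [← h]; simp
    simp only [Finset.mem_insert, Finset.mem_singleton] at h1 h2
    grind
  rw [← Set.ncard_image_of_injective _ hF]
  have himg : F '' {τ : {f : Equiv.Perm (Fin n) // f.IsSwap} |
        transpositionConjOp n ⟨Equiv.swap i j, i, j, hij, rfl⟩ τ = ⟨Equiv.swap i j, i, j, hij, rfl⟩}
      = ((insert {i, j} (Finset.powersetCard 2 ({i, j}ᶜ : Finset (Fin n))) :
          Finset (Finset (Fin n))) : Set (Finset (Fin n))) := by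
    ext t
    simp only [Set.mem_image, Set.mem_setOf_eq, Finset.coe_insert, Set.mem_insert_iff,
      Finset.mem_coe, Finset.mem_powersetCard]
    constructor
    · rintro ⟨⟨_, k, l, hkl, rfl⟩, h, rfl⟩
      have h' := (conj_iff_aux i j k l hij hkl).1 (congrArg Subtype.val h)
      simp only [F, Equiv.Perm.support_swap hkl]
      rcases h' with (⟨rfl, rfl⟩ | ⟨rfl, rfl⟩) | h'
      · left; rfl
      · left; exact Finset.pair_comm _ _
      · right
        refine ⟨?_, Finset.card_pair hkl⟩
        intro x hx
        simp only [Finset.mem_insert, Finset.mem_singleton, Finset.mem_compl] at hx ⊢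
        grind
    · rintro (rfl | ⟨h1, h2⟩)
      · refine ⟨⟨Equiv.swap i j, i, j, hij, rfl⟩, ?_, Equiv.Perm.support_swap hij⟩
        exact Subtype.ext ((conj_iff_aux i j i j hij hij).2 (Or.inl (Or.inl ⟨rfl, rfl⟩)))
      · obtain ⟨k, l, hkl, rfl⟩ := Finset.card_eq_two.1 h2
        refine ⟨⟨Equiv.swap k l, k, l, hkl, rfl⟩, ?_, Equiv.Perm.support_swap hkl⟩
        refine Subtype.ext ((conj_iff_aux i j k l hij hkl).2 (Or.inr ?_))
        have hk : k ∈ ({i, j}ᶜ : Finset (Fin n)) := h1 (by simp)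
        have hl : l ∈ ({i, j}ᶜ : Finset (Fin n)) := h1 (by simp)
        simp only [Finset.mem_insert, Finset.mem_singleton, Finset.mem_compl] at hk hl
        grind
  rw [himg, Set.ncard_coe_finset, Finset.card_insert_of_notMem, Finset.card_powersetCard,
    Finset.card_compl, Finset.card_pair hij, Fintype.card_fin]
  intro h
  have := (Finset.mem_powersetCard.1 h).1 (show i ∈ ({i, j} : Finset (Fin n)) by simp)
  simp at this

/-- For `n ≥ 2`, the set `Q` of transpositions of `S_n` with
`σ * τ = τ⁻¹στ` is a quandle; `(i,j) * (k,l) = (i,j)` iff `{i,j} = {k,l}` or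
`{i,j} ∩ {k,l} = ∅`; and `Q` is a `(C(n-2,2)+1)`-almost quasigroup quandle. -/
theorem transposition_quandle_is_mAQ (n : ℕ) (hn : 2 ≤ n) :
    (∀ σ : {f : Equiv.Perm (Fin n) // f.IsSwap},
      transpositionConjOp n σ σ = σ) ∧
    (∀ τ : {f : Equiv.Perm (Fin n) // f.IsSwap},
      Function.Bijective fun σ => transpositionConjOp n σ τ) ∧
    (∀ σ τ ρ : {f : Equiv.Perm (Fin n) // f.IsSwap},
      transpositionConjOp n (transpositionConjOp n σ τ) ρ
        = transpositionConjOp n (transpositionConjOp n σ ρ)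
            (transpositionConjOp n τ ρ)) ∧
    (∀ i j k l : Fin n, i ≠ j → k ≠ l →
      ((Equiv.swap k l)⁻¹ * Equiv.swap i j * Equiv.swap k l = Equiv.swap i j ↔
        ({i, j} : Set (Fin n)) = {k, l} ∨
        ({i, j} : Set (Fin n)) ∩ {k, l} = ∅)) ∧
    (∀ σ : {f : Equiv.Perm (Fin n) // f.IsSwap},
      Set.ncard {τ : {f : Equiv.Perm (Fin n) // f.IsSwap} |
          transpositionConjOp n σ τ = σ}
        = Nat.choose (n - 2) 2 + 1) ∧
    (∀ σ τ : {f : Equiv.Perm (Fin n) // f.IsSwap},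
      transpositionConjOp n σ τ ≠ σ →
        ∃! ρ : {f : Equiv.Perm (Fin n) // f.IsSwap},
          transpositionConjOp n σ ρ = τ) := by
  refine ⟨?_, ?_, ?_, ?_, ncard_aux, ?_⟩
  · intro σ
    apply Subtype.ext
    simp [transpositionConjOp]
  · intro τ
    refine Finite.injective_iff_bijective.1 ?_
    intro a b h
    have h' := congrArg Subtype.val h
    simp only [transpositionConjOp] at h'
    exact Subtype.ext (mul_left_cancel (mul_right_cancel h'))
  · intro σ τ ρ
    apply Subtype.ext
    simp only [transpositionConjOp]
    group
  · intro i j k l hij hkl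
    rw [conj_iff_aux i j k l hij hkl, Set.pair_eq_pair_iff]
    refine or_congr Iff.rfl ?_
    rw [← Set.disjoint_iff_inter_eq_empty]
    simp only [Set.disjoint_insert_left, Set.disjoint_singleton_left, Set.mem_insert_iff,
      Set.mem_singleton_iff]
    tauto
  · rintro ⟨_, i, j, hij, rfl⟩ ⟨_, k, l, hkl, rfl⟩ h
    obtain ⟨a, b, hab, H⟩ := conj_unique_aux i j k l hij hkl
      (fun h' => h (Subtype.ext ((conj_iff_aux i j k l hij hkl).2 h')))
    refine ⟨⟨Equiv.swap a b, a, b, hab, rfl⟩, Subtype.ext ((H a b hab).2 rfl), ?_⟩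
    rintro ⟨_, c, d, hcd, rfl⟩ h'
    exact Subtype.ext ((H c d hcd).1 (congrArg Subtype.val h'))
end

section
/- Let X be a finite m-almost quasigroup quandle such that for each a ∈ X the stabilizer S_a is a trivial subquandle of X. Then for each n ≥ 1 and each 1 ≤ j ≤ n, the chain maps (|X|−m)·g_1^j and (|X|−m)·g_2^j on the rack chain complex C_*^R(X) are chain homotopic; in particular they induce equal maps on the rack homology H_n^R(X). -/
/-- The stabilizer `S_a = {x | a * x = a}` as a finset. -/
def stabF {X : Type} [Fintype X] [DecidableEq X] (op : X → X → X) (a : X) :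
    Finset X :=
  Finset.univ.filter fun y => op a y = a

/-- The chain map `g_1^j` (`j` is 1-based, `1 ≤ j ≤ n`; zero otherwise):
`g_1^j(x) = Σ_{k ∈ S_{x_j}} (k, …, k, x_j, x_{j+1}, …, x_n)`
(the first `j-1` entries equal `k`). -/
def g1map {X : Type} [Fintype X] [DecidableEq X] (op : X → X → X) (n j : ℕ) :
    RackChain X n →+ RackChain X n :=
  FreeAbelianGroup.lift fun x =>
    if h : 1 ≤ j ∧ j ≤ n then
      ∑ k ∈ stabF op (x ⟨j - 1, by omega⟩),
        FreeAbelianGroup.of (fun i : Fin n => if (i : ℕ) < j - 1 then k else x i)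
    else 0

/-- The chain map `g_2^j` (`j` is 1-based, `1 ≤ j ≤ n`; zero otherwise):
`g_2^j(x) = Σ_{k ∈ S_{x_j}} (k, …, k, x_{j+1}, …, x_n)`
(the first `j` entries equal `k`). -/
def g2map {X : Type} [Fintype X] [DecidableEq X] (op : X → X → X) (n j : ℕ) :
    RackChain X n →+ RackChain X n :=
  FreeAbelianGroup.lift fun x =>
    if h : 1 ≤ j ∧ j ≤ n then
      ∑ k ∈ stabF op (x ⟨j - 1, by omega⟩),
        FreeAbelianGroup.of (fun i : Fin n => if (i : ℕ) < j then k else x i)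
    else 0

/-- The chain map `g_0^j` (`j` is 1-based, `1 ≤ j ≤ n`; zero otherwise):
`g_0^j(x) = Σ_{k ∈ S_{x_j}} (x_j, …, x_j, k, x_{j+1}, …, x_n)`
(the first `j-1` entries equal `x_j`, the `j`-th entry is `k`). -/
def g0map {X : Type} [Fintype X] [DecidableEq X] (op : X → X → X) (n j : ℕ) :
    RackChain X n →+ RackChain X n :=
  FreeAbelianGroup.lift fun x =>
    if h : 1 ≤ j ∧ j ≤ n then
      ∑ k ∈ stabF op (x ⟨j - 1, by omega⟩),
        FreeAbelianGroup.of (fun i : Fin n =>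
          if (i : ℕ) < j - 1 then x ⟨j - 1, by omega⟩
          else if (i : ℕ) = j - 1 then k else x i)
    else 0

/-- The symmetrizer chain map `g_s^j` (`j` is 1-based):
`g_s^j(x) = Σ_{y ∈ X} (y, …, y, x_{j+1}, …, x_n)` (the first `j` entries equal `y`). -/
def gsmap {X : Type} [Fintype X] [DecidableEq X] (op : X → X → X) (n j : ℕ) :
    RackChain X n →+ RackChain X n :=
  FreeAbelianGroup.lift fun x =>
    ∑ y : X, FreeAbelianGroup.of (fun i : Fin n => if (i : ℕ) < j then y else x i)

namespace MAQ

variable {X : Type} [Fintype X] [DecidableEq X] {A B : Type} [AddCommGroup A] [AddCommGroup B]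

/-- The tuple `(c,…,c,u,x_{p+1},…)`. -/
def V {X : Type} (N p : ℕ) (x : Fin N → X) (c u : X) : Fin N → X :=
  fun i => if (i : ℕ) < p then c else if (i : ℕ) = p then u else x i

/-- The tuple `(c,…,c,u,v,x_{p+1},…)`. -/
def W {X : Type} (N p : ℕ) (x : Fin N → X) (c u v : X) : Fin (N + 1) → X :=
  fun i => if (i : ℕ) < p then c else if (i : ℕ) = p then u else
    if h : (i : ℕ) ≤ p + 1 then v else x ⟨(i : ℕ) - 1, by omega⟩

/-- The combination of triples defining the homotopy. -/
def E (op : X → X → X) (a : X) : (X → X → X → A) →+ A where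
  toFun Φ := ∑ k ∈ stabF op a, ∑ y : X, (-Φ k y a + Φ a y a + Φ a a y - Φ k k y)
  map_zero' := by simp
  map_add' := by
    intro Φ Ψ
    simp only [← Finset.sum_add_distrib, Pi.add_apply]
    refine Finset.sum_congr rfl fun k _ => Finset.sum_congr rfl fun y _ => ?_
    abel

lemma E_apply (op : X → X → X) (a : X) (Φ : X → X → X → A) :
    E op a Φ = ∑ k ∈ stabF op a, ∑ y : X, (-Φ k y a + Φ a y a + Φ a a y - Φ k k y) := rfl

lemma map_E (op : X → X → X) (a : X) (Φ : X → X → X → A) (f : A →+ B) :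
    f (E op a Φ) = E op a (fun c u v => f (Φ c u v)) := by
  simp [E_apply, map_sum]

lemma mem_stabF (op : X → X → X) (a x : X) : x ∈ stabF op a ↔ op a x = a := by
  simp [stabF]

lemma E_equiv (op : X → X → X)
    (hbij : ∀ b : X, Function.Bijective fun x => op x b)
    (hdist : ∀ a b c : X, op (op a b) c = op (op a c) (op b c)) (a z : X)
    (Φ : X → X → X → A) :
    E op (op a z) Φ = E op a (fun c u v => Φ (op c z) (op u z) (op v z)) := by
  rw [E_apply, E_apply]
  symm
  refine Finset.sum_bij (fun k _ => op k z) ?_ ?_ ?_ ?_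
  · intro k hk
    rw [mem_stabF] at *
    rw [← hdist, hk]
  · intro k _ k' _ h
    exact (hbij z).1 h
  · intro b hb
    obtain ⟨k, rfl⟩ := (hbij z).2 b
    refine ⟨k, ?_, rfl⟩
    rw [mem_stabF] at *
    exact (hbij z).1 ((hdist _ _ _).trans hb)
  · intro k hk
    exact (hbij z).sum_comp
      (fun y => -Φ (op k z) y (op a z) + Φ (op a z) y (op a z) + Φ (op a z) (op a z) y
        - Φ (op k z) (op k z) y)

lemma sum_op (op : X → X → X) (m : ℕ)
    (hidem : ∀ a : X, op a a = a)
    (hstab : ∀ a : X, (stabF op a).card = m)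
    (hsol : ∀ a b : X, op a b ≠ a → ∃! x : X, op a x = b) (a : X) (Q : X → A) :
    ∑ y, Q (op a y) = m • Q a + ∑ b ∈ (stabF op a)ᶜ, Q b := by
  rw [← Finset.sum_add_sum_compl (stabF op a)]
  congr 1
  · rw [← hstab a, ← Finset.sum_const]
    refine Finset.sum_congr rfl fun y hy => ?_
    rw [(mem_stabF _ _ _).1 hy]
  · have hex : ∀ b, ∃ x, b ∈ (stabF op a)ᶜ → op a x = b := by
      intro b
      by_cases hb : op a b = a
      · exact ⟨b, fun h => absurd ((mem_stabF _ _ _).2 hb) (Finset.mem_compl.1 h)⟩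
      · obtain ⟨x, hx, _⟩ := hsol a b hb
        exact ⟨x, fun _ => hx⟩
    choose s hs using hex
    have hmaps : ∀ b ∈ (stabF op a)ᶜ, s b ∈ (stabF op a)ᶜ := by
      intro b hb
      rw [Finset.mem_compl, mem_stabF]
      intro h
      rw [hs b hb] at h
      subst h
      exact Finset.mem_compl.1 hb ((mem_stabF _ _ _).2 (hidem _))
    have hinj : Set.InjOn s ((stabF op a)ᶜ : Finset X) := by
      intro b hb b' hb' h
      rw [← hs b hb, ← hs b' hb', h]
    have hsurj := Finset.surjOn_of_injOn_of_card_le s hmaps hinj le_rfl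
    symm
    refine Finset.sum_bij (fun b _ => s b) hmaps (fun b hb b' hb' h => hinj hb hb' h) ?_ ?_
    · intro y hy
      obtain ⟨b, hb, h⟩ := hsurj hy
      exact ⟨b, hb, h⟩
    · intro b hb
      rw [hs b hb]

lemma E_main (op : X → X → X) (m : ℕ)
    (hidem : ∀ a : X, op a a = a)
    (hbij : ∀ b : X, Function.Bijective fun x => op x b)
    (hstab : ∀ a : X, (stabF op a).card = m)
    (hsol : ∀ a b : X, op a b ≠ a → ∃! x : X, op a x = b)
    (htriv : ∀ a x y : X, op a x = a → op a y = a → op x y = x) (a : X) (P : X → X → A) :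
    E op a (fun c u v => P c u - P c v - P (op c v) (op u v) + P (op c u) v)
      = ((Fintype.card X : ℤ) - (m : ℤ)) • ∑ k ∈ stabF op a, (P k a - P k k) := by
  rw [E_apply, Finset.smul_sum]
  refine Finset.sum_congr rfl fun k hk => ?_
  rw [mem_stabF] at hk
  have hka : op k a = k := htriv a k a hk (hidem a)
  have hS : stabF op k = stabF op a := by
    ext z
    rw [mem_stabF, mem_stabF]
    exact ⟨fun h => htriv k a z hka h, fun h => htriv a k z hk h⟩
  have h1 := sum_op op m hidem hstab hsol k (fun b => P b a)
  have h2 := sum_op op m hidem hstab hsol a (fun b => P b a)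
  have h3 := sum_op op m hidem hstab hsol k (fun b => P b b)
  have h4 := sum_op op m hidem hstab hsol a (fun b => P b b)
  have h5 := (hbij a).sum_comp (fun y => P k y)
  have h6 := (hbij a).sum_comp (fun y => P a y)
  rw [hS] at h1 h3
  simp only [hka, hidem]
  simp only [Finset.sum_add_distrib, Finset.sum_sub_distrib, Finset.sum_neg_distrib] at *
  rw [h1, h2, h3, h4, h5, h6]
  simp only [Finset.sum_const, Finset.card_univ, sub_smul, smul_sub, natCast_zsmul]
  abel

lemma face_lt {X : Type} (op : X → X → X) (hidem : ∀ a : X, op a a = a) (n p : ℕ)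
    (x : Fin (n + 1) → X) (c u v : X) (i : Fin (n + 2)) (hi : (i : ℕ) < p) :
    dStar op (n + 1) i (W (n + 1) p x c u v) = dZero (n + 1) i (W (n + 1) p x c u v) := by
  funext j
  simp only [dStar, dZero]
  split_ifs with h
  · have h1 : W (n + 1) p x c u v j.castSucc = c := by
      simp [W]; omega
    have h2 : W (n + 1) p x c u v i = c := by
      simp [W]; omega
    rw [h1, h2, hidem]
  · rfl

lemma face_p {X : Type} (op : X → X → X) (n p : ℕ) (hp : p < n + 1)
    (x : Fin (n + 1) → X) (c u v : X) :
    dZero (n + 1) ⟨p, by omega⟩ (W (n + 1) p x c u v) = V (n + 1) p x c v ∧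
    dStar op (n + 1) ⟨p, by omega⟩ (W (n + 1) p x c u v) = V (n + 1) p x (op c u) v := by
  constructor <;> funext j <;> simp only [dZero, dStar, V, W, Fin.val_castSucc, Fin.val_succ] <;>
    split_ifs <;> first | rfl | omega

lemma face_p1 {X : Type} (op : X → X → X) (n p : ℕ) (hp : p < n + 1)
    (x : Fin (n + 1) → X) (c u v : X) :
    dZero (n + 1) ⟨p + 1, by omega⟩ (W (n + 1) p x c u v) = V (n + 1) p x c u ∧
    dStar op (n + 1) ⟨p + 1, by omega⟩ (W (n + 1) p x c u v)
      = V (n + 1) p x (op c v) (op u v) := by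
  constructor <;> funext j <;> simp only [dZero, dStar, V, W, Fin.val_castSucc, Fin.val_succ] <;>
    split_ifs <;> first | rfl | omega

lemma face_gt {X : Type} (op : X → X → X) (n p : ℕ)
    (x : Fin (n + 1) → X) (c u v : X) (i : Fin (n + 1)) (hi : p < (i : ℕ)) :
    dZero (n + 1) i.succ (W (n + 1) p x c u v) = W n p (dZero n i x) c u v ∧
    dStar op (n + 1) i.succ (W (n + 1) p x c u v)
      = W n p (dStar op n i x) (op c (x i)) (op u (x i)) (op v (x i)) := by
  have hx : ∀ h : (i : ℕ) + 1 - 1 < n + 1, x ⟨(i : ℕ) + 1 - 1, h⟩ = x i := fun _ => rfl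
  constructor <;> funext j <;>
    simp only [dZero, dStar, W, Fin.val_castSucc, Fin.val_succ, Fin.castSucc_mk, Fin.succ_mk] <;>
    split_ifs <;>
    first
    | rfl
    | omega
    | (congr 1; apply Fin.ext; simp; omega)
    | (congr 2; apply Fin.ext; simp; omega)

lemma boundary_of {X : Type} (op : X → X → X) (n : ℕ) (x : Fin (n + 1) → X) :
    rackBoundary op n (FreeAbelianGroup.of x) =
    ∑ i : Fin (n + 1), ((-1 : ℤ) ^ ((i : ℕ) + 1)) •
      (FreeAbelianGroup.of (dZero n i x) - FreeAbelianGroup.of (dStar op n i x)) := by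
  simp [rackBoundary]

lemma sum_split (n p : ℕ) (hp : p < n + 1) (f : Fin (n + 2) → A)
    (hf : ∀ i : Fin (n + 2), (i : ℕ) < p → f i = 0) :
    ∑ i, f i = f ⟨p, by omega⟩ + f ⟨p + 1, by omega⟩
      + ∑ i : Fin (n + 1), if p < (i : ℕ) then f i.succ else 0 := by
  have h : ∀ i, f i = (if i = ⟨p, by omega⟩ then f i else 0)
      + (if i = ⟨p + 1, by omega⟩ then f i else 0) + (if p + 1 < (i : ℕ) then f i else 0) := by
    intro i
    simp only [Fin.ext_iff]
    rcases lt_trichotomy (i : ℕ) p with h | h | h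
    · rw [hf i h]; simp
    · rw [if_pos h, if_neg (by omega), if_neg (by omega)]; simp
    · by_cases h' : (i : ℕ) = p + 1
      · rw [if_neg (by omega), if_pos h', if_neg (by omega)]; simp
      · rw [if_neg (by omega), if_neg h', if_pos (by omega)]; simp
  rw [Finset.sum_congr rfl fun i _ => h i, Finset.sum_add_distrib, Finset.sum_add_distrib]
  congr 1
  · simp
  · rw [Fin.sum_univ_succ]
    simp

open FreeAbelianGroup in
lemma boundary_W {X : Type} (op : X → X → X) (hidem : ∀ a : X, op a a = a) (n p : ℕ)
    (hp : p < n + 1) (x : Fin (n + 1) → X) (c u v : X) :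
    rackBoundary op (n + 1) (of (W (n + 1) p x c u v)) =
      ((-1 : ℤ) ^ p) • (of (V (n + 1) p x c u) - of (V (n + 1) p x c v)
        - of (V (n + 1) p x (op c v) (op u v)) + of (V (n + 1) p x (op c u) v))
      + ∑ i : Fin (n + 1), if p < (i : ℕ) then ((-1 : ℤ) ^ (i : ℕ)) •
        (of (W n p (dZero n i x) c u v)
          - of (W n p (dStar op n i x) (op c (x i)) (op u (x i)) (op v (x i)))) else 0 := by
  rw [boundary_of, sum_split n p hp]
  · rw [(face_p op n p hp x c u v).1, (face_p op n p hp x c u v).2,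
      (face_p1 op n p hp x c u v).1, (face_p1 op n p hp x c u v).2]
    congr 1
    · have e1 : ((-1 : ℤ) ^ (p + 1)) = -(-1) ^ p := by ring
      have e2 : ((-1 : ℤ) ^ (p + 1 + 1)) = (-1) ^ p := by ring
      simp only [e1, e2, neg_smul, smul_sub, smul_add]
      abel
    · refine Finset.sum_congr rfl fun i _ => ?_
      split_ifs with h
      · rw [(face_gt op n p x c u v i h).1, (face_gt op n p x c u v i h).2]
        congr 1
        rw [Fin.val_succ]; ring
      · rfl
  · intro i hi
    rw [face_lt op hidem n p x c u v i hi]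
    simp

/-- The homotopy. -/
def H (op : X → X → X) (N p : ℕ) : RackChain X N →+ RackChain X (N + 1) :=
  FreeAbelianGroup.lift fun x =>
    if h : p < N then
      ((-1 : ℤ) ^ p) • E op (x ⟨p, h⟩) (fun c u v => FreeAbelianGroup.of (W N p x c u v))
    else 0

lemma H_of (op : X → X → X) (N p : ℕ) (h : p < N) (x : Fin N → X) :
    H op N p (FreeAbelianGroup.of x) =
      ((-1 : ℤ) ^ p) • E op (x ⟨p, h⟩) (fun c u v => FreeAbelianGroup.of (W N p x c u v)) := by
  simp [H, h]

lemma H_of_not (op : X → X → X) (N p : ℕ) (h : ¬ p < N) (x : Fin N → X) :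
    H op N p (FreeAbelianGroup.of x) = 0 := by
  simp [H, h]

lemma H_face_le (op : X → X → X) (n p : ℕ) (x : Fin (n + 1) → X) (i : Fin (n + 1))
    (hi : (i : ℕ) ≤ p) :
    H op n p (FreeAbelianGroup.of (dStar op n i x))
      = H op n p (FreeAbelianGroup.of (dZero n i x)) := by
  by_cases h : p < n
  · rw [H_of op n p h, H_of op n p h]
    have h1 : dStar op n i x ⟨p, h⟩ = dZero n i x ⟨p, h⟩ := by
      simp only [dStar, dZero]
      rw [if_neg (by simpa using hi), if_neg (by simpa using hi)]
    have h2 : ∀ c u v, W n p (dStar op n i x) c u v = W n p (dZero n i x) c u v := by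
      intro c u v
      funext j
      simp only [W, dStar, dZero]
      split_ifs <;> first | rfl | omega
    rw [h1]
    simp only [h2]
  · rw [H_of_not op n p h, H_of_not op n p h]

open FreeAbelianGroup in
lemma main_of (op : X → X → X) (m : ℕ)
    (hidem : ∀ a : X, op a a = a)
    (hbij : ∀ b : X, Function.Bijective fun x => op x b)
    (hdist : ∀ a b c : X, op (op a b) c = op (op a c) (op b c))
    (hstab : ∀ a : X, (stabF op a).card = m)
    (hsol : ∀ a b : X, op a b ≠ a → ∃! x : X, op a x = b)
    (htriv : ∀ a x y : X, op a x = a → op a y = a → op x y = x)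
    (n p : ℕ) (hp : p < n + 1) (x : Fin (n + 1) → X) :
    rackBoundary op (n + 1) (H op (n + 1) p (of x)) + H op n p (rackBoundary op n (of x))
      = ((Fintype.card X : ℤ) - (m : ℤ)) •
          (g1map op (n + 1) (p + 1) (of x) - g2map op (n + 1) (p + 1) (of x)) := by
  have hg1 : g1map op (n + 1) (p + 1) (of x)
      = ∑ k ∈ stabF op (x ⟨p, hp⟩), of (V (n + 1) p x k (x ⟨p, hp⟩)) := by
    have hc : 1 ≤ p + 1 ∧ p + 1 ≤ n + 1 := by omega
    simp only [g1map, lift_apply_of, dif_pos hc]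
    refine Finset.sum_congr rfl fun k _ => ?_
    congr 1
    funext i
    simp only [V, Nat.add_sub_cancel]
    split_ifs with h1 h2
    · rfl
    · congr 1; exact Fin.ext h2
    · rfl
  have hg2 : g2map op (n + 1) (p + 1) (of x)
      = ∑ k ∈ stabF op (x ⟨p, hp⟩), of (V (n + 1) p x k k) := by
    have hc : 1 ≤ p + 1 ∧ p + 1 ≤ n + 1 := by omega
    simp only [g2map, lift_apply_of, dif_pos hc]
    refine Finset.sum_congr rfl fun k _ => ?_
    congr 1
    funext i
    simp only [V]
    split_ifs <;> first | rfl | omega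
  rw [hg1, hg2, ← Finset.sum_sub_distrib,
    ← E_main op m hidem hbij hstab hsol htriv (x ⟨p, hp⟩)
      (fun c u => of (V (n + 1) p x c u)), H_of op _ p hp, map_zsmul, map_E]
  simp only [boundary_W op hidem n p hp x]
  have hsplit : (fun c u v : X => ((-1 : ℤ) ^ p) • (of (V (n + 1) p x c u)
        - of (V (n + 1) p x c v)
        - of (V (n + 1) p x (op c v) (op u v)) + of (V (n + 1) p x (op c u) v))
      + ∑ i : Fin (n + 1), if p < (i : ℕ) then ((-1 : ℤ) ^ (i : ℕ)) •
        (of (W n p (dZero n i x) c u v)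
          - of (W n p (dStar op n i x) (op c (x i)) (op u (x i)) (op v (x i)))) else 0)
      = ((-1 : ℤ) ^ p) • (fun c u v : X => of (V (n + 1) p x c u)
        - of (V (n + 1) p x c v)
        - of (V (n + 1) p x (op c v) (op u v)) + of (V (n + 1) p x (op c u) v))
      + ∑ i : Fin (n + 1), if p < (i : ℕ) then ((-1 : ℤ) ^ (i : ℕ)) •
        ((fun c u v : X => of (W n p (dZero n i x) c u v))
          - (fun c u v : X =>
            of (W n p (dStar op n i x) (op c (x i)) (op u (x i)) (op v (x i))))) else 0 := by
    funext c u v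
    simp only [Pi.add_apply, Pi.smul_apply, Finset.sum_apply]
    congr 1
    refine Finset.sum_congr rfl fun i _ => ?_
    split_ifs <;> rfl
  rw [hsplit, map_add, map_zsmul, map_sum, smul_add, smul_smul, ← mul_pow]
  simp only [mul_neg, mul_one, neg_neg, one_pow, one_smul]
  rw [add_assoc, add_eq_left, boundary_of, map_sum, Finset.smul_sum, ← Finset.sum_add_distrib]
  refine Finset.sum_eq_zero fun i _ => ?_
  rw [map_zsmul, map_sub]
  by_cases hi : p < (i : ℕ)
  · have hpn : p < n := by omega
    rw [if_pos hi, H_of op n p hpn, H_of op n p hpn, map_zsmul, map_sub]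
    have e0 : dZero n i x ⟨p, hpn⟩ = x ⟨p, hp⟩ := by
      simp only [dZero]; rw [if_pos hi]; rfl
    have e1 : dStar op n i x ⟨p, hpn⟩ = op (x ⟨p, hp⟩) (x i) := by
      simp only [dStar]; rw [if_pos hi]; rfl
    rw [e0, e1, E_equiv op hbij hdist, ← smul_sub, smul_smul, smul_smul, ← add_smul]
    have : ((-1 : ℤ) ^ p * (-1) ^ (i : ℕ) + (-1) ^ ((i : ℕ) + 1) * (-1) ^ p) = 0 := by ring
    rw [this, zero_smul]
  · rw [if_neg hi, H_face_le op n p x i (by omega)]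
    simp

end MAQ

/-- For a finite `m`-almost quasigroup quandle `X` with all
stabilizers trivial subquandles, the chain maps `(|X|-m)·g_1^j` and
`(|X|-m)·g_2^j` are chain homotopic (for `1 ≤ j ≤ n`); in particular they
induce equal maps on rack homology. -/
theorem mAQ_g1_g2_chain_homotopic
    {X : Type} [Fintype X] [DecidableEq X] (op : X → X → X) (m : ℕ)
    (hm : 1 ≤ m)
    (hidem : ∀ a : X, op a a = a)
    (hbij : ∀ b : X, Function.Bijective fun x => op x b)
    (hdist : ∀ a b c : X, op (op a b) c = op (op a c) (op b c))
    (hstab : ∀ a : X, (stabF op a).card = m)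
    (hsol : ∀ a b : X, op a b ≠ a → ∃! x : X, op a x = b)
    (htriv : ∀ a x y : X, op a x = a → op a y = a → op x y = x) :
    ∀ (n j : ℕ), 1 ≤ j → j ≤ n + 1 →
      (∃ (G : RackChain X (n + 1) →+ RackChain X (n + 2))
         (G' : RackChain X n →+ RackChain X (n + 1)),
        ∀ c : RackChain X (n + 1),
          rackBoundary op (n + 1) (G c) + G' (rackBoundary op n c)
            = ((Fintype.card X : ℤ) - (m : ℤ)) •
                (g1map op (n + 1) j c - g2map op (n + 1) j c)) ∧
      (∀ c ∈ (rackBoundary op n).ker,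
        ∃ d : RackChain X (n + 2),
          rackBoundary op (n + 1) d
            = ((Fintype.card X : ℤ) - (m : ℤ)) •
                (g1map op (n + 1) j c - g2map op (n + 1) j c)) := by
  intro n j hj1 hj2
  obtain ⟨p, rfl⟩ : ∃ p, j = p + 1 := ⟨j - 1, by omega⟩
  have key : ∀ c : RackChain X (n + 1),
      rackBoundary op (n + 1) (MAQ.H op (n + 1) p c) + MAQ.H op n p (rackBoundary op n c)
        = ((Fintype.card X : ℤ) - (m : ℤ)) •
            (g1map op (n + 1) (p + 1) c - g2map op (n + 1) (p + 1) c) := by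
    intro c
    have h : (rackBoundary op (n + 1)).comp (MAQ.H op (n + 1) p)
        + (MAQ.H op n p).comp (rackBoundary op n)
        = ((Fintype.card X : ℤ) - (m : ℤ)) •
            (g1map op (n + 1) (p + 1) - g2map op (n + 1) (p + 1)) := by
      refine FreeAbelianGroup.lift_ext _ _ fun x => ?_
      exact MAQ.main_of op m hidem hbij hdist hstab hsol htriv n p (by omega) x
    exact DFunLike.congr_fun h c
  refine ⟨⟨_, _, key⟩, fun c hc => ⟨MAQ.H op (n + 1) p c, ?_⟩⟩
  rw [← key c, (AddMonoidHom.mem_ker).1 hc, map_zero, add_zero]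
end

section
/- Let X be a finite m-almost quasigroup quandle such that for each a ∈ X the stabilizer S_a is a trivial subquandle of X. For 1 ≤ j ≤ n define G_n^j : C_n^R(X) → C_{n+1}^R(X) on generators x = (x_1,…,x_n) by G_n^j(x) = Σ_{k=1}^m Σ_{y∈X} [ (x_j^{(k)},…,x_j^{(k)}, x_j, y, x_{j+1},…,x_n) − (x_j,…,x_j, x_j^{(k)}, y, x_{j+1},…,x_n) ], where in each tuple the first j−1 entries are equal (to x_j^{(k)} and x_j respectively). Then ∂_{n+1}∘G_n^j + G_{n−1}^j∘∂_n = (−1)^{j+1}(|X|−m)(g_1^j − g_0^j) as maps C_n^R(X) → C_n^R(X). -/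
/-- The chain homotopy `G_n^j` (`j` 1-based, `1 ≤ j ≤ n`; zero otherwise):
`G_n^j(x) = Σ_{k ∈ S_{x_j}} Σ_{y ∈ X} [(k, …, k, x_j, y, x_{j+1}, …, x_n)
− (x_j, …, x_j, k, y, x_{j+1}, …, x_n)]` (first `j-1` entries equal). -/
def Gmap {X : Type} [Fintype X] [DecidableEq X] (op : X → X → X) (n j : ℕ) :
    RackChain X n →+ RackChain X (n + 1) :=
  FreeAbelianGroup.lift fun x =>
    if h : 1 ≤ j ∧ j ≤ n then
      ∑ k ∈ stabF op (x ⟨j - 1, by omega⟩), ∑ y : X,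
        (FreeAbelianGroup.of (fun i : Fin (n + 1) =>
            if (i : ℕ) < j - 1 then k
            else if (i : ℕ) = j - 1 then x ⟨j - 1, by omega⟩
            else if (i : ℕ) = j then y
            else x ⟨(i : ℕ) - 1, by have := i.isLt; omega⟩)
         - FreeAbelianGroup.of (fun i : Fin (n + 1) =>
            if (i : ℕ) < j - 1 then x ⟨j - 1, by omega⟩
            else if (i : ℕ) = j - 1 then k
            else if (i : ℕ) = j then y
            else x ⟨(i : ℕ) - 1, by have := i.isLt; omega⟩))
    else 0

/-- The tuple `(a, …, a, b, y, x_{p+1}, …)`. -/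
def tupT {X : Type} (n p : ℕ) (a b y : X) (x : Fin n → X) : Fin (n + 1) → X :=
  fun i => if (i : ℕ) < p then a else if (i : ℕ) = p then b
    else if (i : ℕ) = p + 1 then y
    else if h : (i : ℕ) - 1 < n then x ⟨(i : ℕ) - 1, h⟩ else y

/-- The tuple `(a, …, a, b, x_{p+1}, …)`. -/
def tupU {X : Type} (n p : ℕ) (a b : X) (x : Fin n → X) : Fin n → X :=
  fun i => if (i : ℕ) < p then a else if (i : ℕ) = p then b else x i

theorem Gmap_of {X : Type} [Fintype X] [DecidableEq X] (op : X → X → X) (n p : ℕ)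
    (hp : p < n) (x : Fin n → X) :
    Gmap op n (p + 1) (FreeAbelianGroup.of x) =
      ∑ k ∈ stabF op (x ⟨p, hp⟩), ∑ y : X,
        (FreeAbelianGroup.of (tupT n p k (x ⟨p, hp⟩) y x)
          - FreeAbelianGroup.of (tupT n p (x ⟨p, hp⟩) k y x)) := by
  have key : ∀ (a b y : X), tupT n p a b y x = (fun i : Fin (n + 1) =>
            if (i : ℕ) < p then a
            else if (i : ℕ) = p then b
            else if (i : ℕ) = p + 1 then y
            else x ⟨(i : ℕ) - 1, by have := i.isLt; omega⟩) := by
    intro a b y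
    funext i
    have := i.isLt
    have h : (i : ℕ) - 1 < n := by omega
    simp [tupT, h]
  unfold Gmap
  rw [FreeAbelianGroup.lift_apply_of, dif_pos ⟨by omega, by omega⟩]
  simp only [key]
  rfl

theorem Gmap_zero {X : Type} [Fintype X] [DecidableEq X] (op : X → X → X) (n p : ℕ)
    (hp : ¬ p < n) (x : Fin n → X) :
    Gmap op n (p + 1) (FreeAbelianGroup.of x) = 0 := by
  unfold Gmap
  rw [FreeAbelianGroup.lift_apply_of, dif_neg (by omega)]

theorem g1map_of {X : Type} [Fintype X] [DecidableEq X] (op : X → X → X) (n p : ℕ)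
    (hp : p < n) (x : Fin n → X) :
    g1map op n (p + 1) (FreeAbelianGroup.of x) =
      ∑ k ∈ stabF op (x ⟨p, hp⟩), FreeAbelianGroup.of (tupU n p k (x ⟨p, hp⟩) x) := by
  unfold g1map
  rw [FreeAbelianGroup.lift_apply_of, dif_pos ⟨by omega, by omega⟩]
  refine Finset.sum_congr rfl fun k _ => ?_
  congr 1
  funext i
  simp only [tupU, Nat.add_sub_cancel]
  split_ifs with h1 h2
  · rfl
  · congr 1
    exact Fin.ext h2
  · rfl

theorem g0map_of {X : Type} [Fintype X] [DecidableEq X] (op : X → X → X) (n p : ℕ)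
    (hp : p < n) (x : Fin n → X) :
    g0map op n (p + 1) (FreeAbelianGroup.of x) =
      ∑ k ∈ stabF op (x ⟨p, hp⟩), FreeAbelianGroup.of (tupU n p (x ⟨p, hp⟩) k x) := by
  unfold g0map
  rw [FreeAbelianGroup.lift_apply_of, dif_pos ⟨by omega, by omega⟩]
  rfl

theorem tupT_congr {X : Type} (n p : ℕ) (a b y : X) (x x' : Fin n → X)
    (h : ∀ i : Fin n, p < (i : ℕ) → x i = x' i) : tupT n p a b y x = tupT n p a b y x' := by
  funext i
  simp only [tupT]
  split_ifs with h1 h2 h3 h4 <;> try rfl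
  exact h _ (by simp only; omega)

theorem Gmap_congr {X : Type} [Fintype X] [DecidableEq X] (op : X → X → X) (n p : ℕ)
    (x x' : Fin n → X) (h : ∀ i : Fin n, p ≤ (i : ℕ) → x i = x' i) :
    Gmap op n (p + 1) (FreeAbelianGroup.of x) = Gmap op n (p + 1) (FreeAbelianGroup.of x') := by
  by_cases hp : p < n
  · rw [Gmap_of op n p hp, Gmap_of op n p hp, h ⟨p, hp⟩ le_rfl]
    have := fun a b y => tupT_congr n p a b y x x' (fun i hi => h i hi.le)
    simp only [this]
  · rw [Gmap_zero op n p hp, Gmap_zero op n p hp]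

theorem boundary_tupT {X : Type} (op : X → X → X) (hidem : ∀ a : X, op a a = a)
    (n p : ℕ) (hp : p < n + 1) (a b y : X) (hab : op a b = a) (x : Fin (n + 1) → X) :
    rackBoundary op (n + 1) (FreeAbelianGroup.of (tupT (n + 1) p a b y x)) =
      ((-1 : ℤ) ^ p) • (FreeAbelianGroup.of (tupU (n + 1) p a b x)
          - FreeAbelianGroup.of (tupU (n + 1) p (op a y) (op b y) x))
      + ∑ i : Fin (n + 1), if p < (i : ℕ) then ((-1 : ℤ) ^ (i : ℕ)) •
          (FreeAbelianGroup.of (tupT n p a b y (dZero n i x))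
            - FreeAbelianGroup.of (tupT n p (op a (x i)) (op b (x i)) (op y (x i))
                (dStar op n i x))) else 0 := by
  unfold rackBoundary
  rw [FreeAbelianGroup.lift_apply_of,
    Fin.sum_univ_succAbove _ (⟨p + 1, by omega⟩ : Fin (n + 1 + 1))]
  congr 1
  · have e : ((-1 : ℤ) ^ (p + 1 + 1)) = (-1) ^ p := by ring
    simp only [e]
    congr 3
    · funext i
      have := i.isLt
      simp only [dZero, tupT, tupU, Fin.val_castSucc, Fin.val_succ]
      split_ifs <;> first | rfl | omega
    · funext i
      have := i.isLt
      simp only [dStar, tupT, tupU, Fin.val_castSucc, Fin.val_succ]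
      split_ifs <;> first | rfl | omega
  · refine Finset.sum_congr rfl fun i _ => ?_
    have hi := i.isLt
    split_ifs with h
    · rw [Fin.succAbove_of_le_castSucc _ _ (by rw [Fin.le_def]; simp; omega)]
      have e : ((-1 : ℤ) ^ ((i.succ : ℕ) + 1)) = (-1) ^ (i : ℕ) := by
        rw [Fin.val_succ]; ring
      have e0 : dZero (n + 1) i.succ (tupT (n + 1) p a b y x)
          = tupT n p a b y (dZero n i x) := by
        funext l
        have := l.isLt
        simp only [dZero, tupT, Fin.val_castSucc, Fin.val_succ, Fin.castSucc_mk, Fin.succ_mk]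
        split_ifs <;> first | rfl | omega | (congr 1; apply Fin.ext; simp only; omega)
      have e1 : dStar op (n + 1) i.succ (tupT (n + 1) p a b y x)
          = tupT n p (op a (x i)) (op b (x i)) (op y (x i)) (dStar op n i x) := by
        have ex : tupT (n + 1) p a b y x i.succ = x i := by
          simp only [tupT, Fin.val_succ]
          split_ifs <;> first | rfl | omega
        funext l
        have := l.isLt
        simp only [dStar, ex]
        simp only [dStar, tupT, Fin.val_castSucc, Fin.val_succ, Fin.castSucc_mk, Fin.succ_mk]
        split_ifs <;> first | rfl | omega | (congr 1; apply Fin.ext; simp only; omega)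
      rw [e, e0, e1]
    · rw [Fin.succAbove_of_castSucc_lt _ _ (by rw [Fin.lt_def]; simp; omega)]
      have e1 : dStar op (n + 1) i.castSucc (tupT (n + 1) p a b y x)
          = dZero (n + 1) i.castSucc (tupT (n + 1) p a b y x) := by
        funext l
        simp only [dStar, dZero]
        split_ifs with hl
        · rw [Fin.val_castSucc] at hl
          have t1 : tupT (n + 1) p a b y x l.castSucc = a := by
            simp only [tupT, Fin.val_castSucc]
            rw [if_pos (by omega)]
          rw [t1]
          simp only [tupT, Fin.val_castSucc]
          split_ifs <;> first | exact hidem a | exact hab | omega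
        · rfl
      rw [e1, sub_self, smul_zero]

theorem mem_stabF {X : Type} [Fintype X] [DecidableEq X] (op : X → X → X) (a k : X) :
    k ∈ stabF op a ↔ op a k = a := by simp [stabF]

theorem stab_reindex {X : Type} [Fintype X] [DecidableEq X] (op : X → X → X)
    (hbij : ∀ b : X, Function.Bijective fun x => op x b)
    (hdist : ∀ a b c : X, op (op a b) c = op (op a c) (op b c))
    {A : Type} [AddCommGroup A] (a c : X) (f : X → A) :
    ∑ k ∈ stabF op (op a c), f k = ∑ k ∈ stabF op a, f (op k c) := by
  symm
  refine Finset.sum_bij (fun k _ => op k c) ?_ ?_ ?_ ?_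
  · intro k hk
    rw [mem_stabF] at *
    rw [← hdist, hk]
  · intro k _ l _ h
    exact (hbij c).1 h
  · intro l hl
    obtain ⟨k, rfl⟩ := (hbij c).2 l
    refine ⟨k, ?_, rfl⟩
    rw [mem_stabF] at *
    simp only [← hdist] at hl
    exact (hbij c).1 hl
  · intros; rfl

theorem middle {X : Type} [Fintype X] [DecidableEq X] (op : X → X → X) (m : ℕ)
    (hidem : ∀ a : X, op a a = a)
    (hbij : ∀ b : X, Function.Bijective fun x => op x b)
    (hdist : ∀ a b c : X, op (op a b) c = op (op a c) (op b c))
    (hstab : ∀ a : X, (stabF op a).card = m)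
    (hsol : ∀ a b : X, op a b ≠ a → ∃! x : X, op a x = b)
    (htriv : ∀ a x y : X, op a x = a → op a y = a → op x y = x)
    {A : Type} [AddCommGroup A] (f : X → X → A) (a : X) :
    ∑ k ∈ stabF op a, ∑ y : X, (f (op k y) (op a y) - f (op a y) (op k y))
      = (m : ℤ) • ∑ k ∈ stabF op a, (f k a - f a k) := by
  rw [Finset.sum_comm]
  set H : X → A := fun z => ∑ k ∈ stabF op z, (f k z - f z k) with hH
  have h1 : ∀ y, ∑ k ∈ stabF op a, (f (op k y) (op a y) - f (op a y) (op k y))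
      = H (op a y) := by
    intro y
    rw [hH]
    simp only
    rw [stab_reindex op hbij hdist a y]
  simp only [h1]
  set C : Finset X := (stabF op a)ᶜ with hC
  have memC : ∀ z, z ∈ C ↔ op a z ≠ a := by
    intro z
    rw [hC, Finset.mem_compl, mem_stabF]
  have hsub : C ⊆ C.image (op a) := by
    intro z hz
    have hz' := (memC z).1 hz
    obtain ⟨x, hx, -⟩ := hsol a z hz'
    refine Finset.mem_image.2 ⟨x, (memC x).2 ?_, hx⟩
    intro h
    rw [h] at hx
    exact hz' (hx ▸ hidem a)
  have himg : C = C.image (op a) := Finset.eq_of_subset_of_card_le hsub Finset.card_image_le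
  have hinj : Set.InjOn (op a) (C : Set X) :=
    Finset.card_image_iff.1 (congrArg Finset.card himg.symm)
  have hsumC : ∑ y ∈ C, H (op a y) = ∑ z ∈ C, H z := by
    conv_rhs => rw [himg]
    rw [Finset.sum_image hinj]
  have hzero : ∑ z ∈ C, H z = 0 := by
    simp only [hH, Finset.sum_sub_distrib]
    rw [sub_eq_zero]
    have sym : ∀ u v, op u v = u → op v u = v := fun u v h => htriv u v u h (hidem u)
    have imp : ∀ u v, op a u ≠ a → op u v = u → op a v ≠ a := by
      intro u v hu huv hav
      exact hu (htriv v a u (sym a v hav) (sym u v huv))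
    refine Finset.sum_comm' ?_
    intro u v
    simp only [memC, mem_stabF]
    exact ⟨fun ⟨h, h'⟩ => ⟨sym _ _ h', imp _ _ h h'⟩, fun ⟨h', h⟩ => ⟨imp _ _ h h', sym _ _ h'⟩⟩
  rw [← Finset.sum_add_sum_compl (stabF op a), ← hC, hsumC, hzero, add_zero]
  rw [Finset.sum_congr rfl (g := fun _ => H a)
    (fun y hy => by rw [(mem_stabF op a y).1 hy]), Finset.sum_const, hstab]
  rw [natCast_zsmul]

/-- For a finite `m`-almost quasigroup quandle `X` with all
stabilizers trivial subquandles,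
`∂_{n+1}∘G_n^j + G_{n-1}^j∘∂_n = (−1)^{j+1}(|X|−m)(g_1^j − g_0^j)`
as maps `C_n^R(X) → C_n^R(X)` (for `1 ≤ j ≤ n`). -/
theorem mAQ_Gmap_homotopy
    {X : Type} [Fintype X] [DecidableEq X] (op : X → X → X) (m : ℕ)
    (hm : 1 ≤ m)
    (hidem : ∀ a : X, op a a = a)
    (hbij : ∀ b : X, Function.Bijective fun x => op x b)
    (hdist : ∀ a b c : X, op (op a b) c = op (op a c) (op b c))
    (hstab : ∀ a : X, (stabF op a).card = m)
    (hsol : ∀ a b : X, op a b ≠ a → ∃! x : X, op a x = b)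
    (htriv : ∀ a x y : X, op a x = a → op a y = a → op x y = x) :
    ∀ (n j : ℕ), 1 ≤ j → j ≤ n + 1 →
      ∀ c : RackChain X (n + 1),
        rackBoundary op (n + 1) (Gmap op (n + 1) j c)
            + Gmap op n j (rackBoundary op n c)
          = ((-1 : ℤ) ^ (j + 1) * ((Fintype.card X : ℤ) - (m : ℤ))) •
              (g1map op (n + 1) j c - g0map op (n + 1) j c) := by
  intro n j hj1 hj2 c
  obtain ⟨p, rfl⟩ : ∃ p, j = p + 1 := ⟨j - 1, by omega⟩
  have hp : p < n + 1 := by omega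
  induction c using FreeAbelianGroup.induction_on with
  | zero => simp
  | neg x h => 
    simp only [map_neg]
    rw [← neg_add, h, neg_sub_neg, ← smul_neg, neg_sub]
  | add u v hu hv =>
    simp only [map_add]
    rw [add_add_add_comm, hu, hv, ← smul_add]
    congr 1
    abel
  | of x =>
    have sym : ∀ u v, op u v = u → op v u = v := fun u v h => htriv u v u h (hidem u)
    rw [Gmap_of op (n + 1) p hp, g1map_of op (n + 1) p hp, g0map_of op (n + 1) p hp]
    set a := x ⟨p, hp⟩ with ha
    -- the second summand
    have hG : Gmap op n (p + 1) (rackBoundary op n (FreeAbelianGroup.of x))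
        = - ∑ i : Fin (n + 1), ∑ k ∈ stabF op a, ∑ y : X,
          if p < (i : ℕ) then ((-1 : ℤ) ^ (i : ℕ)) •
          ((FreeAbelianGroup.of (tupT n p k a y (dZero n i x))
            - FreeAbelianGroup.of (tupT n p (op k (x i)) (op a (x i)) (op y (x i))
                (dStar op n i x)))
           - (FreeAbelianGroup.of (tupT n p a k y (dZero n i x))
            - FreeAbelianGroup.of (tupT n p (op a (x i)) (op k (x i)) (op y (x i))
                (dStar op n i x)))) else 0 := by
      unfold rackBoundary
      rw [FreeAbelianGroup.lift_apply_of, map_sum, ← Finset.sum_neg_distrib]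
      refine Finset.sum_congr rfl fun i _ => ?_
      rw [map_zsmul, map_sub]
      have hi := i.isLt
      by_cases h : p < (i : ℕ)
      · simp only [if_pos h]
        have hpn : p < n := by omega
        have e0 : dZero n i x ⟨p, hpn⟩ = a := by
          simp only [dZero, if_pos h]; rfl
        have e1 : dStar op n i x ⟨p, hpn⟩ = op a (x i) := by
          simp only [dStar, if_pos h]; rfl
        rw [Gmap_of op n p hpn, Gmap_of op n p hpn, e0, e1, stab_reindex op hbij hdist]
        have hy : ∀ g : X → RackChain X (n + 1), ∑ y, g y = ∑ y, g (op y (x i)) :=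
          fun g => ((Equiv.ofBijective _ (hbij (x i))).sum_comp g).symm
        rw [← Finset.sum_sub_distrib, pow_succ, mul_neg_one, neg_smul, Finset.smul_sum]
        congr 1
        refine Finset.sum_congr rfl fun k _ => ?_
        rw [hy (fun y => FreeAbelianGroup.of (tupT n p (op k (x i)) (op a (x i)) y
                (dStar op n i x)) - FreeAbelianGroup.of (tupT n p (op a (x i)) (op k (x i)) y
                (dStar op n i x))), ← Finset.sum_sub_distrib, Finset.smul_sum]
        refine Finset.sum_congr rfl fun y _ => ?_
        congr 1
        abel
      · simp only [if_neg h, Finset.sum_const_zero, neg_zero]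
        rw [Gmap_congr op n p (dZero n i x) (dStar op n i x), sub_self, smul_zero]
        intro l hl
        simp only [dZero, dStar]
        rw [if_neg (by omega), if_neg (by omega)]
    have hB : rackBoundary op (n + 1) (∑ k ∈ stabF op a, ∑ y : X,
        (FreeAbelianGroup.of (tupT (n + 1) p k a y x)
          - FreeAbelianGroup.of (tupT (n + 1) p a k y x)))
        = (∑ k ∈ stabF op a, ∑ y : X, ((-1 : ℤ) ^ p) •
          ((FreeAbelianGroup.of (tupU (n + 1) p k a x)
              - FreeAbelianGroup.of (tupU (n + 1) p a k x))
           - (FreeAbelianGroup.of (tupU (n + 1) p (op k y) (op a y) x)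
              - FreeAbelianGroup.of (tupU (n + 1) p (op a y) (op k y) x))))
          + ∑ i : Fin (n + 1), ∑ k ∈ stabF op a, ∑ y : X,
          if p < (i : ℕ) then ((-1 : ℤ) ^ (i : ℕ)) •
          ((FreeAbelianGroup.of (tupT n p k a y (dZero n i x))
            - FreeAbelianGroup.of (tupT n p (op k (x i)) (op a (x i)) (op y (x i))
                (dStar op n i x)))
           - (FreeAbelianGroup.of (tupT n p a k y (dZero n i x))
            - FreeAbelianGroup.of (tupT n p (op a (x i)) (op k (x i)) (op y (x i))
                (dStar op n i x)))) else 0 := by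
      rw [Finset.sum_comm (s := Finset.univ) (t := stabF op a), map_sum,
        ← Finset.sum_add_distrib]
      refine Finset.sum_congr rfl fun k hk => ?_
      rw [mem_stabF] at hk
      rw [Finset.sum_comm, map_sum, ← Finset.sum_add_distrib]
      refine Finset.sum_congr rfl fun y _ => ?_
      rw [map_sub, boundary_tupT op hidem n p hp k a y (sym a k hk),
        boundary_tupT op hidem n p hp a k y hk, add_sub_add_comm, ← smul_sub,
        ← Finset.sum_sub_distrib]
      congr 1
      · congr 1
        abel
      · refine Finset.sum_congr rfl fun i _ => ?_
        split_ifs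
        · simp only [smul_sub]
        · rw [sub_zero]
    rw [hB, hG, add_neg_cancel_right]
    simp only [← Finset.smul_sum]
    have hmid := middle op m hidem hbij hdist hstab hsol htriv
      (fun u v => FreeAbelianGroup.of (tupU (n + 1) p u v x)) a
    simp only [Finset.sum_sub_distrib (f := fun y : X => _ - _)] at hmid ⊢
    simp only [Finset.sum_sub_distrib, Finset.sum_const, Finset.card_univ] at hmid ⊢
    rw [hmid]
    have e : ((-1 : ℤ) ^ (p + 1 + 1)) = (-1) ^ p := by ring
    rw [e, mul_smul, sub_smul]
    simp only [← Finset.smul_sum, natCast_zsmul, smul_sub]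
end

section
/- Let X be a finite m-almost quasigroup quandle such that for each a ∈ X the stabilizer S_a is a trivial subquandle of X. For 2 ≤ j ≤ n define E_n^j : C_n^R(X) → C_{n+1}^R(X) on generators x = (x_1,…,x_n) by E_n^j(x) = Σ_{k=1}^m Σ_{y∈X} (x_j^{(k)},…,x_j^{(k)}, y, x_j, x_{j+1},…,x_n), where the first j−1 entries equal x_j^{(k)}. Then ∂_{n+1}∘E_n^j + E_{n−1}^j∘∂_n = (−1)^j(|X|·g_1^j − m·g_s^{j−1}) as maps C_n^R(X) → C_n^R(X). -/
/-- The chain homotopy `E_n^j` (`j` 1-based, `2 ≤ j ≤ n`; zero otherwise):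
`E_n^j(x) = Σ_{k ∈ S_{x_j}} Σ_{y ∈ X} (k, …, k, y, x_j, x_{j+1}, …, x_n)`
(the first `j-1` entries equal `k`, then `y`, then `x_j`). -/
def Emap {X : Type} [Fintype X] [DecidableEq X] (op : X → X → X) (n j : ℕ) :
    RackChain X n →+ RackChain X (n + 1) :=
  FreeAbelianGroup.lift fun x =>
    if h : 2 ≤ j ∧ j ≤ n then
      ∑ k ∈ stabF op (x ⟨j - 1, by omega⟩), ∑ y : X,
        FreeAbelianGroup.of (fun i : Fin (n + 1) =>
          if (i : ℕ) < j - 1 then k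
          else if (i : ℕ) = j - 1 then y
          else if (i : ℕ) = j then x ⟨j - 1, by omega⟩
          else x ⟨(i : ℕ) - 1, by have := i.isLt; omega⟩)
    else 0

/-- The tuple `(k, …, k, y, x_p, x_{p+1}, …)` with `p` entries `k` (0-indexed). -/
def eTup {X : Type} (n p : ℕ) (hp : p < n) (k y : X) (x : Fin n → X) : Fin (n + 1) → X :=
  fun i => if h : (i : ℕ) < p then k else if h' : (i : ℕ) = p then y
    else x ⟨(i : ℕ) - 1, by have := i.isLt; omega⟩

theorem Emap_of_pos {X : Type} [Fintype X] [DecidableEq X] (op : X → X → X) (n p : ℕ)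
    (hp1 : 1 ≤ p) (hp : p < n) (x : Fin n → X) :
    Emap op n (p + 1) (FreeAbelianGroup.of x) =
      ∑ k ∈ stabF op (x ⟨p, hp⟩), ∑ y : X, FreeAbelianGroup.of (eTup n p hp k y x) := by
  unfold Emap
  rw [FreeAbelianGroup.lift_apply_of, dif_pos (by omega)]
  refine Finset.sum_congr rfl fun k _ => Finset.sum_congr rfl fun y _ => ?_
  congr 1
  funext i
  simp only [eTup, Nat.add_sub_cancel]
  split_ifs with h1 h2 h3
  · rfl
  · rfl
  · congr 1; ext; simp [h3]
  · rfl

theorem Emap_of_neg {X : Type} [Fintype X] [DecidableEq X] (op : X → X → X) (n p : ℕ)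
    (hp : ¬ p < n) (x : Fin n → X) :
    Emap op n (p + 1) (FreeAbelianGroup.of x) = 0 := by
  unfold Emap
  rw [FreeAbelianGroup.lift_apply_of, dif_neg (by omega)]

theorem stabF_op {X : Type} [Fintype X] [DecidableEq X] (op : X → X → X)
    (hbij : ∀ b : X, Function.Bijective fun x => op x b)
    (hdist : ∀ a b c : X, op (op a b) c = op (op a c) (op b c)) (a b : X) :
    stabF op (op a b) = (stabF op a).image (fun k => op k b) := by
  ext z
  simp only [stabF, Finset.mem_filter, Finset.mem_univ, true_and, Finset.mem_image]
  constructor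
  · intro h
    obtain ⟨k, rfl⟩ := (hbij b).2 z
    refine ⟨k, ?_, rfl⟩
    simp only at h
    rw [← hdist] at h
    exact (hbij b).1 h
  · rintro ⟨k, hk, rfl⟩
    rw [← hdist, hk]

/-- Key counting fact. -/
theorem sum_orbit {X : Type} [Fintype X] [DecidableEq X] (op : X → X → X) (m : ℕ)
    (hidem : ∀ a : X, op a a = a)
    (hstab : ∀ a : X, (stabF op a).card = m)
    (hsol : ∀ a b : X, op a b ≠ a → ∃! x : X, op a x = b)
    {G : Type} [AddCommGroup G] (F : X → G) (k : X) :
    ∑ y : X, F (op k y) = m • F k + ∑ b ∈ (stabF op k)ᶜ, F b := by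
  rw [← Finset.sum_add_sum_compl (stabF op k)]
  congr 1
  · rw [← hstab k, ← Finset.sum_const]
    refine Finset.sum_congr rfl fun y hy => ?_
    simp only [stabF, Finset.mem_filter, Finset.mem_univ, true_and] at hy
    rw [hy]
  · have key : ∀ b, b ∈ (stabF op k)ᶜ ↔ op k b ≠ k := by
      intro b; simp [stabF]
    choose! g hg hu using fun b (hb : op k b ≠ k) => hsol k b hb
    have hsub : (stabF op k)ᶜ.image g ⊆ (stabF op k)ᶜ := by
      intro z hz
      obtain ⟨b, hb, rfl⟩ := Finset.mem_image.1 hz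
      rw [key] at hb ⊢
      have := hg b hb
      simp only at this
      rw [this]
      rintro rfl
      exact hb (hidem _)
    have hinj : Set.InjOn g ((stabF op k)ᶜ : Finset X) := by
      intro b hb c hc h
      have hb' := hg b ((key b).1 hb)
      have hc' := hg c ((key c).1 hc)
      simp only at hb' hc'
      rw [← hb', h, hc']
    have himg : (stabF op k)ᶜ.image g = (stabF op k)ᶜ :=
      Finset.eq_of_subset_of_card_le hsub (by rw [Finset.card_image_of_injOn hinj])
    conv_lhs => rw [← himg]
    rw [Finset.sum_image hinj]
    refine Finset.sum_congr rfl fun b hb => ?_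
    have := hg b ((key b).1 hb)
    simp only at this
    rw [this]

theorem stabF_eq {X : Type} [Fintype X] [DecidableEq X] (op : X → X → X) (m : ℕ)
    (hstab : ∀ a : X, (stabF op a).card = m)
    (htriv : ∀ a x y : X, op a x = a → op a y = a → op x y = x) (a k : X)
    (hk : k ∈ stabF op a) : stabF op k = stabF op a := by
  symm
  refine Finset.eq_of_subset_of_card_le ?_ (by rw [hstab, hstab])
  intro y hy
  simp only [stabF, Finset.mem_filter, Finset.mem_univ, true_and] at hk hy ⊢
  exact htriv a k y hk hy

theorem sum_orbit_stab {X : Type} [Fintype X] [DecidableEq X] (op : X → X → X) (m : ℕ)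
    (hidem : ∀ a : X, op a a = a)
    (hstab : ∀ a : X, (stabF op a).card = m)
    (hsol : ∀ a b : X, op a b ≠ a → ∃! x : X, op a x = b)
    (htriv : ∀ a x y : X, op a x = a → op a y = a → op x y = x)
    {G : Type} [AddCommGroup G] (F : X → G) (a : X) :
    ∑ k ∈ stabF op a, ∑ y : X, F (op k y) = m • ∑ y : X, F y := by
  have : ∀ k ∈ stabF op a, ∑ y : X, F (op k y) = m • F k + ∑ b ∈ (stabF op a)ᶜ, F b := by
    intro k hk
    rw [sum_orbit op m hidem hstab hsol, stabF_eq op m hstab htriv a k hk]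
  rw [Finset.sum_congr rfl this, Finset.sum_add_distrib, Finset.sum_const, hstab,
    ← Finset.smul_sum, ← smul_add, Finset.sum_add_sum_compl]

section tuples
variable {X : Type} (op : X → X → X) (n p : ℕ) (hp : p < n + 1) (k y : X) (x : Fin (n + 1) → X)

theorem tup_lt (hidem : ∀ a : X, op a a = a) (i : Fin (n + 2)) (hi : (i : ℕ) < p) :
    dStar op (n + 1) i (eTup (n + 1) p hp k y x) = dZero (n + 1) i (eTup (n + 1) p hp k y x) := by
  funext l
  by_cases h : (l : ℕ) < i
  · have : (l : ℕ) < p := by omega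
    simp [dStar, dZero, eTup, h, hi, this, hidem]
  · simp [dStar, dZero, h]

theorem tup_p_zero :
    dZero (n + 1) ⟨p, by omega⟩ (eTup (n + 1) p hp k y x)
      = fun i : Fin (n + 1) => if (i : ℕ) < p then k else x i := by
  funext l
  by_cases h : (l : ℕ) < p
  · simp [dZero, eTup, h]
  · have h1 : ¬ (l : ℕ) + 1 < p := by omega
    have h2 : ¬ (l : ℕ) + 1 = p := by omega
    simp [dZero, eTup, h, h1, h2]

theorem tup_p_star :
    dStar op (n + 1) ⟨p, by omega⟩ (eTup (n + 1) p hp k y x)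
      = fun i : Fin (n + 1) => if (i : ℕ) < p then op k y else x i := by
  funext l
  by_cases h : (l : ℕ) < p
  · simp [dStar, eTup, h]
  · have h1 : ¬ (l : ℕ) + 1 < p := by omega
    have h2 : ¬ (l : ℕ) + 1 = p := by omega
    simp [dStar, eTup, h, h1, h2]

theorem tup_succ_star (hk : op k (x ⟨p, hp⟩) = k) :
    dStar op (n + 1) ⟨p + 1, by omega⟩ (eTup (n + 1) p hp k y x)
      = dZero (n + 1) ⟨p + 1, by omega⟩ (eTup (n + 1) p hp k (op y (x ⟨p, hp⟩)) x) := by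
  funext l
  rcases lt_trichotomy (l : ℕ) p with h | h | h
  · have h1 : (l : ℕ) < p + 1 := by omega
    simp [dStar, dZero, eTup, h, h1, hk]
  · simp [dStar, dZero, eTup, h]
  · have h1 : ¬ (l : ℕ) < p + 1 := by omega
    have h2 : ¬ (l : ℕ) + 1 < p := by omega
    have h3 : ¬ (l : ℕ) + 1 = p := by omega
    simp [dStar, dZero, eTup, h1, h2, h3]

end tuples

section tuples2
variable {X : Type} (op : X → X → X) (n p : ℕ) (hp : p < n + 1) (k y : X) (x : Fin (n + 2) → X)

theorem tup_gt_zero (i : Fin (n + 2)) (hi : p < (i : ℕ)) :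
    dZero (n + 2) i.succ (eTup (n + 2) p (by omega) k y x)
      = eTup (n + 1) p hp k y (dZero (n + 1) i x) := by
  funext l
  rcases lt_trichotomy (l : ℕ) p with h | h | h
  · have h1 : (l : ℕ) < i + 1 := by omega
    simp [dZero, eTup, h, h1]
  · have h1 : p < (i : ℕ) + 1 := by omega
    simp [dZero, eTup, h, h1]
  · have h2 : ¬ (l : ℕ) + 1 < p := by omega
    have h3 : ¬ (l : ℕ) + 1 = p := by omega
    have h4 : ¬ (l : ℕ) < p := by omega
    have h5 : ¬ (l : ℕ) = p := by omega
    by_cases h6 : (l : ℕ) < i + 1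
    · have h7 : (l : ℕ) - 1 < i := by omega
      simp [dZero, eTup, h2, h3, h4, h5, h6, h7]
    · have h7 : ¬ (l : ℕ) - 1 < i := by omega
      simp [dZero, eTup, h2, h3, h4, h5, h6, h7]
      congr 1; ext; simp; omega

theorem tup_gt_star (i : Fin (n + 2)) (hi : p < (i : ℕ)) :
    dStar op (n + 2) i.succ (eTup (n + 2) p (by omega) k y x)
      = eTup (n + 1) p hp (op k (x i)) (op y (x i)) (dStar op (n + 1) i x) := by
  have h8 : ¬ (i : ℕ) + 1 < p := by omega
  have h9 : ¬ (i : ℕ) + 1 = p := by omega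
  funext l
  rcases lt_trichotomy (l : ℕ) p with h | h | h
  · have h1 : (l : ℕ) < i + 1 := by omega
    simp [dStar, eTup, h, h1, h8, h9]
  · have h1 : p < (i : ℕ) + 1 := by omega
    simp [dStar, eTup, h, h1, h8, h9]
  · have h2 : ¬ (l : ℕ) + 1 < p := by omega
    have h3 : ¬ (l : ℕ) + 1 = p := by omega
    have h4 : ¬ (l : ℕ) < p := by omega
    have h5 : ¬ (l : ℕ) = p := by omega
    by_cases h6 : (l : ℕ) < i + 1
    · have h7 : (l : ℕ) - 1 < i := by omega
      simp [dStar, eTup, h2, h3, h4, h5, h6, h7, h8, h9]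
    · have h7 : ¬ (l : ℕ) - 1 < i := by omega
      simp [dStar, eTup, h2, h3, h4, h5, h6, h7, h8, h9]
      congr 1; ext; simp; omega

theorem tup_le (i : Fin (n + 2)) (hi : (i : ℕ) ≤ p) :
    eTup (n + 1) p hp k y (dStar op (n + 1) i x) = eTup (n + 1) p hp k y (dZero (n + 1) i x) := by
  funext l
  rcases lt_trichotomy (l : ℕ) p with h | h | h
  · simp [eTup, h]
  · simp [eTup, h]
  · have h4 : ¬ (l : ℕ) < p := by omega
    have h5 : ¬ (l : ℕ) = p := by omega
    have h7 : ¬ (l : ℕ) - 1 < i := by omega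
    simp [eTup, dStar, dZero, h4, h5, h7]

end tuples2

theorem homotopy_gen
    {X : Type} [Fintype X] [DecidableEq X] (op : X → X → X) (m : ℕ)
    (hidem : ∀ a : X, op a a = a)
    (hbij : ∀ b : X, Function.Bijective fun x => op x b)
    (hdist : ∀ a b c : X, op (op a b) c = op (op a c) (op b c))
    (hstab : ∀ a : X, (stabF op a).card = m)
    (hsol : ∀ a b : X, op a b ≠ a → ∃! x : X, op a x = b)
    (htriv : ∀ a x y : X, op a x = a → op a y = a → op x y = x)
    (n p : ℕ) (hp1 : 1 ≤ p) (hp : p < n + 1) (x : Fin (n + 1) → X) :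
    rackBoundary op (n + 1) (Emap op (n + 1) (p + 1) (FreeAbelianGroup.of x))
        + Emap op n (p + 1) (rackBoundary op n (FreeAbelianGroup.of x))
      = ((-1 : ℤ) ^ (p + 1)) •
          ((Fintype.card X : ℤ) • g1map op (n + 1) (p + 1) (FreeAbelianGroup.of x)
            - (m : ℤ) • gsmap op (n + 1) p (FreeAbelianGroup.of x)) := by
  set A : Fin (n + 2) → RackChain X (n + 1) := fun i =>
    ∑ k ∈ stabF op (x ⟨p, hp⟩), ∑ y : X,
      (FreeAbelianGroup.of (dZero (n + 1) i (eTup (n + 1) p hp k y x))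
        - FreeAbelianGroup.of (dStar op (n + 1) i (eTup (n + 1) p hp k y x))) with hA
  set B : Fin (n + 1) → RackChain X (n + 1) := fun i =>
    Emap op n (p + 1) (FreeAbelianGroup.of (dZero n i x))
      - Emap op n (p + 1) (FreeAbelianGroup.of (dStar op n i x)) with hB
  have e1 : rackBoundary op (n + 1) (Emap op (n + 1) (p + 1) (FreeAbelianGroup.of x))
      = ∑ i : Fin (n + 2), ((-1 : ℤ) ^ ((i : ℕ) + 1)) • A i := by
    rw [Emap_of_pos op (n + 1) p hp1 hp, map_sum]
    simp only [map_sum, rackBoundary, FreeAbelianGroup.lift_apply_of, hA, Finset.smul_sum]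
    rw [Finset.sum_comm]
    simp_rw [Finset.sum_comm (s := (Finset.univ : Finset (Fin (n + 2))))]
    rw [Finset.sum_comm]
  have e2 : Emap op n (p + 1) (rackBoundary op n (FreeAbelianGroup.of x))
      = ∑ i : Fin (n + 1), ((-1 : ℤ) ^ ((i : ℕ) + 1)) • B i := by
    simp only [rackBoundary, FreeAbelianGroup.lift_apply_of, map_sum, map_zsmul, map_sub, hB]
  have A_lt : ∀ i : Fin (n + 2), (i : ℕ) < p → A i = 0 := by
    intro i hi
    simp only [hA]
    refine Finset.sum_eq_zero fun k _ => Finset.sum_eq_zero fun y _ => ?_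
    rw [tup_lt op n p hp k y x hidem i hi, sub_self]
  have A_succ : A ⟨p + 1, by omega⟩ = 0 := by
    simp only [hA]
    refine Finset.sum_eq_zero fun k hk => ?_
    have hk' : op k (x ⟨p, hp⟩) = k := by
      simp only [stabF, Finset.mem_filter, Finset.mem_univ, true_and] at hk
      exact htriv _ _ _ hk (hidem _)
    rw [Finset.sum_sub_distrib, sub_eq_zero]
    simp only [tup_succ_star op n p hp k _ x hk']
    exact ((hbij (x ⟨p, hp⟩)).sum_comp (fun y => FreeAbelianGroup.of
      (dZero (n + 1) ⟨p + 1, by omega⟩ (eTup (n + 1) p hp k y x)))).symm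
  have A_p : A ⟨p, by omega⟩ =
      (Fintype.card X : ℤ) • g1map op (n + 1) (p + 1) (FreeAbelianGroup.of x)
            - (m : ℤ) • gsmap op (n + 1) p (FreeAbelianGroup.of x) := by
    simp only [hA, tup_p_zero, tup_p_star, Finset.sum_sub_distrib]
    congr 1
    · unfold g1map
      rw [FreeAbelianGroup.lift_apply_of, dif_pos (by omega)]
      simp [Finset.smul_sum]
    · unfold gsmap
      rw [FreeAbelianGroup.lift_apply_of, natCast_zsmul]
      exact sum_orbit_stab op m hidem hstab hsol htriv (fun z => FreeAbelianGroup.of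
        (fun i : Fin (n + 1) => if (i : ℕ) < p then z else x i)) (x ⟨p, hp⟩)
  have B_le : ∀ i : Fin (n + 1), (i : ℕ) ≤ p → B i = 0 := by
    intro i hi
    simp only [hB]
    by_cases hpn : p < n
    · obtain ⟨n, rfl⟩ : ∃ n', n = n' + 1 := ⟨n - 1, by omega⟩
      rw [Emap_of_pos op _ p hp1 hpn, Emap_of_pos op _ p hp1 hpn, sub_eq_zero]
      simp only [tup_le op n p hpn _ _ x i hi]
      have : dZero (n + 1) i x ⟨p, hpn⟩ = dStar op (n + 1) i x ⟨p, hpn⟩ := by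
        have h : ¬ p < (i : ℕ) := by omega
        simp [dZero, dStar, h]
      rw [this]
    · rw [Emap_of_neg op _ p hpn, Emap_of_neg op _ p hpn, sub_self]
  have AB : ∀ i : Fin (n + 1), p < (i : ℕ) → A i.succ = B i := by
    intro i hi
    have hpn : p < n := by omega
    obtain ⟨n, rfl⟩ : ∃ n', n = n' + 1 := ⟨n - 1, by omega⟩
    simp only [hA, hB, Finset.sum_sub_distrib]
    rw [Emap_of_pos op _ p hp1 hpn, Emap_of_pos op _ p hp1 hpn]
    have h1 : dZero (n + 1) i x ⟨p, hpn⟩ = x ⟨p, hp⟩ := by simp [dZero, hi]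
    have h2 : dStar op (n + 1) i x ⟨p, hpn⟩ = op (x ⟨p, hp⟩) (x i) := by simp [dStar, hi]
    rw [h1, h2, stabF_op op hbij hdist, Finset.sum_image ((hbij (x i)).1.injOn)]
    congr 1
    · simp only [tup_gt_zero n p hpn _ _ x i hi]
    · simp only [tup_gt_star op n p hpn _ _ x i hi]
      refine Finset.sum_congr rfl fun k _ => ?_
      exact (hbij (x i)).sum_comp (fun y => FreeAbelianGroup.of
        (eTup (n + 1) p hpn (op k (x i)) y (dStar op (n + 1) i x)))
  rw [e1, e2, ← A_p, Fin.sum_univ_succ, A_lt 0 (by simp; omega), smul_zero, zero_add,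
    ← Finset.sum_add_distrib, Finset.sum_eq_single (⟨p - 1, by omega⟩ : Fin (n + 1))]
  · rw [B_le _ (by simp), smul_zero, add_zero]
    have : (Fin.succ ⟨p - 1, by omega⟩ : Fin (n + 2)) = ⟨p, by omega⟩ := by
      ext; simp; omega
    rw [this]
  · intro i _ hi
    have hi' : (i : ℕ) ≠ p - 1 := fun h => hi (Fin.ext h)
    rcases lt_trichotomy (i : ℕ) p with h | h | h
    · rw [B_le i h.le, A_lt i.succ (by simp; omega)]; simp
    · rw [B_le i h.le]
      have : i.succ = ⟨p + 1, by omega⟩ := by ext; simp [h]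
      rw [this, A_succ]; simp
    · rw [AB i h, Fin.val_succ, pow_succ (-1 : ℤ) ((i : ℕ) + 1)]; simp
  · simp

/-- For a finite `m`-almost quasigroup quandle `X` with all
stabilizers trivial subquandles,
`∂_{n+1}∘E_n^j + E_{n-1}^j∘∂_n = (−1)^j(|X|·g_1^j − m·g_s^{j-1})`
as maps `C_n^R(X) → C_n^R(X)` (for `2 ≤ j ≤ n`). -/
theorem mAQ_Emap_homotopy
    {X : Type} [Fintype X] [DecidableEq X] (op : X → X → X) (m : ℕ)
    (hm : 1 ≤ m)
    (hidem : ∀ a : X, op a a = a)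
    (hbij : ∀ b : X, Function.Bijective fun x => op x b)
    (hdist : ∀ a b c : X, op (op a b) c = op (op a c) (op b c))
    (hstab : ∀ a : X, (stabF op a).card = m)
    (hsol : ∀ a b : X, op a b ≠ a → ∃! x : X, op a x = b)
    (htriv : ∀ a x y : X, op a x = a → op a y = a → op x y = x) :
    ∀ (n j : ℕ), 2 ≤ j → j ≤ n + 1 →
      ∀ c : RackChain X (n + 1),
        rackBoundary op (n + 1) (Emap op (n + 1) j c)
            + Emap op n j (rackBoundary op n c)
          = ((-1 : ℤ) ^ j) •
              ((Fintype.card X : ℤ) • g1map op (n + 1) j c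
                - (m : ℤ) • gsmap op (n + 1) (j - 1) c) := by
  intro n j hj hjn c
  obtain ⟨p, rfl⟩ : ∃ p, j = p + 1 := ⟨j - 1, by omega⟩
  simp only [Nat.add_sub_cancel]
  induction c using FreeAbelianGroup.induction_on with
  | zero => simp
  | of x => exact homotopy_gen op m hidem hbij hdist hstab hsol htriv n p (by omega) (by omega) x
  | neg x ih =>
    simp only [map_neg, smul_neg]
    rw [← neg_add, ih, ← smul_neg]
    congr 1; abel
  | add a b iha ihb =>
    simp only [map_add, smul_add]
    rw [add_add_add_comm, iha, ihb, ← smul_add]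
    congr 1; abel
end

section
/- Let X be a finite m-almost quasigroup quandle such that for every a ∈ X the stabilizer S_a is a trivial subquandle of X. Then for every n ≥ 1, the torsion subgroup of the rack homology group H_n^R(X) is annihilated by N = m·lcm(|X|, |X|−m). -/
/-- Insert `y` repeated `k` times in place of the first `k` entries, followed by a new entry `z`. -/
def insRep {X : Type} (n k : ℕ) (y z : X) (x : Fin n → X) : Fin (n + 1) → X :=
  fun t => if h0 : (t : ℕ) < k then y else if h : (t : ℕ) = k then z else x ⟨t - 1, by omega⟩

/-- Replace the first `k` entries by `y`. -/
def repl {X : Type} (n k : ℕ) (y : X) (x : Fin n → X) : Fin n → X :=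
  fun t => if (t : ℕ) < k then y else x t

/-- The homotopy on generators. -/
noncomputable def homGen {X : Type} (P : X → Finset (X × X)) (k e n : ℕ) (x : Fin n → X) :
    RackChain X (n + 1) :=
  if h : e < n then ∑ p ∈ P (x ⟨e, h⟩), FreeAbelianGroup.of (insRep n k p.1 p.2 x) else 0

lemma dZero_insRep_lt {X : Type} (op : X → X → X) (hidem : ∀ a : X, op a a = a)
    (n k : ℕ) (y z : X) (x : Fin (n + 1) → X)
    (i : Fin (n + 1 + 1)) (hi : (i : ℕ) < k) :
    dZero (n + 1) i (insRep (n + 1) k y z x) = dStar op (n + 1) i (insRep (n + 1) k y z x) := by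
  funext t
  simp only [dZero, dStar, insRep, Fin.val_castSucc, Fin.val_succ]
  split_ifs <;> first | rfl | omega | simp [hidem]

lemma dZero_insRep_eq {X : Type}
    (n k : ℕ) (y z : X) (x : Fin (n + 1) → X)
    (i : Fin (n + 1 + 1)) (hi : (i : ℕ) = k) :
    dZero (n + 1) i (insRep (n + 1) k y z x) = repl (n + 1) k y x := by
  funext t
  simp only [dZero, repl, insRep, Fin.val_castSucc, Fin.val_succ]
  split_ifs <;> first | rfl | omega

lemma dStar_insRep_eq {X : Type} (op : X → X → X)
    (n k : ℕ) (y z : X) (x : Fin (n + 1) → X)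
    (i : Fin (n + 1 + 1)) (hi : (i : ℕ) = k) :
    dStar op (n + 1) i (insRep (n + 1) k y z x) = repl (n + 1) k (op y z) x := by
  funext t
  simp only [dStar, repl, insRep, Fin.val_castSucc, Fin.val_succ]
  split_ifs <;> first | rfl | omega

lemma dZero_insRep_gt {X : Type}
    (n k : ℕ) (y z : X) (x : Fin (n + 1) → X)
    (i : Fin (n + 1)) (hi : k ≤ (i : ℕ)) :
    dZero (n + 1) i.succ (insRep (n + 1) k y z x) = insRep n k y z (dZero n i x) := by
  funext t
  simp only [dZero, insRep, Fin.val_castSucc, Fin.val_succ]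
  split_ifs <;> first | rfl | omega | (congr 1; apply Fin.ext; simp; try omega)

lemma dStar_insRep_gt {X : Type} (op : X → X → X)
    (n k : ℕ) (y z : X) (x : Fin (n + 1) → X)
    (i : Fin (n + 1)) (hi : k ≤ (i : ℕ)) :
    dStar op (n + 1) i.succ (insRep (n + 1) k y z x)
      = insRep n k (op y (x i)) (op z (x i)) (dStar op n i x) := by
  have h0 : insRep (n + 1) k y z x i.succ = x i := by
    simp only [insRep, Fin.val_succ]
    split_ifs <;> first | rfl | omega
  funext t
  simp only [dStar, h0]
  simp only [insRep, dStar, Fin.val_castSucc, Fin.val_succ]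
  split_ifs <;> first | rfl | omega | (congr 1; apply Fin.ext; simp; omega)

section
variable {X : Type} (op : X → X → X)

lemma equiv_sum (hbij : ∀ b : X, Function.Bijective fun x => op x b)
    (P : X → Finset (X × X))
    (hP : ∀ a c y z, (y, z) ∈ P a ↔ (op y c, op z c) ∈ P (op a c))
    {G : Type} [AddCommGroup G] (φ : X → X → G) (a c : X) :
    ∑ p ∈ P a, φ (op p.1 c) (op p.2 c) = ∑ p ∈ P (op a c), φ p.1 p.2 := by
  refine Finset.sum_bij (fun p _ => (op p.1 c, op p.2 c)) ?_ ?_ ?_ ?_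
  · rintro ⟨y, z⟩ h
    exact (hP a c y z).1 h
  · rintro ⟨y, z⟩ _ ⟨y1, z1⟩ _ h
    simp only [Prod.mk.injEq] at h
    exact Prod.ext ((hbij c).1 h.1) ((hbij c).1 h.2)
  · rintro ⟨y, z⟩ h
    obtain ⟨y1, rfl⟩ := (hbij c).2 y
    obtain ⟨z1, rfl⟩ := (hbij c).2 z
    exact ⟨(y1, z1), (hP a c y1 z1).2 h, rfl⟩
  · intros; rfl

lemma rackBoundary_of (n : ℕ) (x : Fin (n + 1) → X) :
    rackBoundary op n (FreeAbelianGroup.of x) = ∑ i : Fin (n + 1), ((-1 : ℤ) ^ ((i : ℕ) + 1)) •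
      (FreeAbelianGroup.of (dZero n i x) - FreeAbelianGroup.of (dStar op n i x)) := by
  simp [rackBoundary]

lemma homotopy_of (hidem : ∀ a : X, op a a = a)
    (hbij : ∀ b : X, Function.Bijective fun x => op x b)
    (P : X → Finset (X × X))
    (hP : ∀ a c y z, (y, z) ∈ P a ↔ (op y c, op z c) ∈ P (op a c))
    (n k : ℕ) (e : Fin (n + 1)) (hk : k ≤ n + 1) (hek : (e : ℕ) = k ∨ (e : ℕ) + 1 = k)
    (x : Fin (n + 1) → X) :
    rackBoundary op (n + 1) (homGen P k e (n + 1) x)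
      + FreeAbelianGroup.lift (homGen P k e n) (rackBoundary op n (FreeAbelianGroup.of x))
    = ((-1 : ℤ) ^ (k + 1)) • ∑ p ∈ P (x e), (FreeAbelianGroup.of (repl (n + 1) k p.1 x)
        - FreeAbelianGroup.of (repl (n + 1) k (op p.1 p.2) x)) := by
  have h1 : homGen P k e (n + 1) x
      = ∑ p ∈ P (x e), FreeAbelianGroup.of (insRep (n + 1) k p.1 p.2 x) := by
    rw [homGen, dif_pos e.2]
  rw [h1, map_sum]
  simp only [rackBoundary_of]
  rw [Finset.sum_comm, map_sum, Fin.sum_univ_succAbove _ (⟨k, by omega⟩ : Fin (n + 1 + 1)),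
    add_assoc, ← Finset.sum_add_distrib]
  have hz : ∀ i : Fin (n + 1),
      (∑ p ∈ P (x e), ((-1 : ℤ) ^ (((⟨k, by omega⟩ : Fin (n + 1 + 1)).succAbove i : ℕ) + 1)) •
        (FreeAbelianGroup.of (dZero (n + 1) ((⟨k, by omega⟩ : Fin (n + 1 + 1)).succAbove i)
            (insRep (n + 1) k p.1 p.2 x))
          - FreeAbelianGroup.of (dStar op (n + 1) ((⟨k, by omega⟩ : Fin (n + 1 + 1)).succAbove i)
            (insRep (n + 1) k p.1 p.2 x))))
      + FreeAbelianGroup.lift (homGen P k e n) (((-1 : ℤ) ^ ((i : ℕ) + 1)) •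
      (FreeAbelianGroup.of (dZero n i x) - FreeAbelianGroup.of (dStar op n i x))) = 0 := by
    intro i
    rw [map_zsmul, map_sub, FreeAbelianGroup.lift_apply_of, FreeAbelianGroup.lift_apply_of]
    -- the second summand vanishes when `i ≤ e`
    have hsec : (i : ℕ) ≤ e → homGen P k e n (dZero n i x) = homGen P k e n (dStar op n i x) := by
      intro hie
      unfold homGen
      split_ifs with h
      · have ha : dZero n i x ⟨e, h⟩ = dStar op n i x ⟨e, h⟩ := by
          simp only [dZero, dStar]
          split_ifs <;> first | rfl | omega
        rw [ha]
        refine Finset.sum_congr rfl fun p _ => ?_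
        congr 1
        funext t
        simp only [insRep, dZero, dStar]
        split_ifs <;> first | rfl | omega
      · rfl
    rcases lt_or_ge (i : ℕ) k with hik | hik
    · have hs : (⟨k, by omega⟩ : Fin (n + 1 + 1)).succAbove i = i.castSucc :=
        Fin.succAbove_of_castSucc_lt _ _ (by simp [Fin.lt_def, hik])
      rw [hsec (by omega), sub_self, smul_zero, add_zero]
      refine Finset.sum_eq_zero fun p _ => ?_
      rw [hs, dZero_insRep_lt op hidem _ _ _ _ _ _ (by simpa using hik), sub_self, smul_zero]
    · have hs : (⟨k, by omega⟩ : Fin (n + 1 + 1)).succAbove i = i.succ :=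
        Fin.succAbove_of_le_castSucc _ _ (by simp [Fin.le_def, hik])
      rw [hs, ← Finset.smul_sum, Finset.sum_sub_distrib]
      simp only [dZero_insRep_gt n k _ _ x i hik, dStar_insRep_gt op n k _ _ x i hik]
      rw [equiv_sum op hbij P hP (fun y z => FreeAbelianGroup.of (insRep n k y z (dStar op n i x)))
        (x e) (x i)]
      rcases le_or_gt (i : ℕ) e with hie | hie
      · have : i = e := Fin.ext (by omega)
        subst this
        rw [hsec le_rfl, sub_self, smul_zero, add_zero, hidem, ← Finset.sum_sub_distrib]
        rw [Finset.sum_eq_zero, smul_zero]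
        intro p _
        have : insRep n k p.1 p.2 (dZero n i x) = insRep n k p.1 p.2 (dStar op n i x) := by
          funext t
          simp only [insRep, dZero, dStar]
          split_ifs <;> first | rfl | omega
        rw [this, sub_self]
      · have hen : (e : ℕ) < n := by omega
        have h0 : homGen P k e n (dZero n i x)
            = ∑ p ∈ P (x e), FreeAbelianGroup.of (insRep n k p.1 p.2 (dZero n i x)) := by
          unfold homGen
          rw [dif_pos hen]
          have : dZero n i x ⟨e, hen⟩ = x e := by simp [dZero, hie]
          rw [this]
        have h2 : homGen P k e n (dStar op n i x) = ∑ p ∈ P (op (x e) (x i)),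
            FreeAbelianGroup.of (insRep n k p.1 p.2 (dStar op n i x)) := by
          unfold homGen
          rw [dif_pos hen]
          have : dStar op n i x ⟨e, hen⟩ = op (x e) (x i) := by simp [dStar, hie]
          rw [this]
        rw [h0, h2, Fin.val_succ, pow_succ _ ((i : ℕ) + 1)]
        simp
  rw [Finset.sum_eq_zero (fun i _ => hz i), add_zero, ← Finset.smul_sum]
  simp only [dZero_insRep_eq n k _ _ x ⟨k, _⟩ rfl, dStar_insRep_eq op n k _ _ x ⟨k, _⟩ rfl]

lemma homotopy_cycle (hidem : ∀ a : X, op a a = a)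
    (hbij : ∀ b : X, Function.Bijective fun x => op x b)
    (P : X → Finset (X × X))
    (hP : ∀ a c y z, (y, z) ∈ P a ↔ (op y c, op z c) ∈ P (op a c))
    (n k : ℕ) (e : Fin (n + 1)) (hk : k ≤ n + 1) (hek : (e : ℕ) = k ∨ (e : ℕ) + 1 = k)
    (w : RackChain X (n + 1)) (hw : rackBoundary op n w = 0) :
    FreeAbelianGroup.lift (fun x => ∑ p ∈ P (x e), (FreeAbelianGroup.of (repl (n + 1) k p.1 x)
        - FreeAbelianGroup.of (repl (n + 1) k (op p.1 p.2) x))) w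
      ∈ (rackBoundary op (n + 1)).range := by
  set g := FreeAbelianGroup.lift (fun x : Fin (n + 1) → X =>
    ∑ p ∈ P (x e), (FreeAbelianGroup.of (repl (n + 1) k p.1 x)
        - FreeAbelianGroup.of (repl (n + 1) k (op p.1 p.2) x))) with hg
  have key : ((rackBoundary op (n + 1)).comp (FreeAbelianGroup.lift (homGen P k e (n + 1)))
      + (FreeAbelianGroup.lift (homGen P k e n)).comp (rackBoundary op n))
      = ((-1 : ℤ) ^ (k + 1)) • g := by
    ext x
    have := homotopy_of op hidem hbij P hP n k e hk hek x
    simpa [hg] using this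
  have h2 := DFunLike.congr_fun key w
  simp only [AddMonoidHom.add_apply, AddMonoidHom.comp_apply, hw, map_zero, add_zero] at h2
  have h3 : g w = ((-1 : ℤ) ^ (k + 1)) • (((-1 : ℤ) ^ (k + 1)) • g) w := by
    rw [AddMonoidHom.zsmul_apply, smul_smul, ← mul_pow]
    simp
  rw [h3, ← h2]
  exact AddSubgroup.zsmul_mem _ (AddMonoidHom.mem_range.2 ⟨_, rfl⟩) _

/-- augmentation -/
noncomputable def aug (n : ℕ) : RackChain X n →+ ℤ := FreeAbelianGroup.lift fun _ => 1

lemma aug_boundary (n : ℕ) (w : RackChain X (n + 1)) : aug n (rackBoundary op n w) = 0 := by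
  have : (aug n).comp (rackBoundary op n) = 0 := by
    ext x
    simp [rackBoundary_of, aug]
  exact DFunLike.congr_fun this w

end

lemma left_sum {X : Type} [Fintype X] [DecidableEq X] (op : X → X → X) (m : ℕ)
    (hidem : ∀ a : X, op a a = a)
    (hstab : ∀ a : X, (Finset.univ.filter fun x => op a x = a).card = m)
    (hsol : ∀ a b : X, op a b ≠ a → ∃! x : X, op a x = b)
    {G : Type} [AddCommGroup G] (φ : X → G) (a : X) :
    ∑ z, φ (op a z) = m • φ a + (∑ v, φ v - ∑ v ∈ Finset.univ.filter (fun x => op a x = a), φ v) := by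
  rw [← Finset.sum_filter_add_sum_filter_not Finset.univ (fun x => op a x = a) (fun z => φ (op a z)),
    ← Finset.sum_filter_add_sum_filter_not Finset.univ (fun x => op a x = a) φ]
  rw [add_sub_cancel_left]
  congr 1
  · rw [Finset.sum_congr rfl (g := fun _ => φ a), Finset.sum_const, hstab]
    intro z hz
    rw [(Finset.mem_filter.1 hz).2]
  · choose! g hg using fun b hb => (hsol a b hb).exists
    have hmem : ∀ b, op a b ≠ a → op a (g b) ≠ a := by
      intro b hb h
      have := hg b hb
      rw [h] at this
      exact hb (by rw [← this, hidem])
    have himg : (Finset.univ.filter (fun x => ¬ op a x = a)).image g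
        = Finset.univ.filter (fun x => ¬ op a x = a) := by
      apply Finset.eq_of_subset_of_card_le
      · intro z hz
        simp only [Finset.mem_image, Finset.mem_filter, Finset.mem_univ, true_and] at hz ⊢
        obtain ⟨b, hb, rfl⟩ := hz
        exact hmem b hb
      · rw [Finset.card_image_of_injOn]
        intro b hb c hc h
        simp only [Finset.coe_filter, Finset.mem_univ, true_and, Set.mem_ofPred_eq] at hb hc
        rw [← hg b hb, ← hg c hc, h]
    symm
    refine Finset.sum_bij (fun b _ => g b) ?_ ?_ ?_ ?_
    · intro b hb
      simp only [Finset.mem_filter, Finset.mem_univ, true_and] at hb ⊢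
      exact hmem b hb
    · intro b hb c hc h
      simp only [Finset.mem_filter, Finset.mem_univ, true_and] at hb hc
      rw [← hg b hb, ← hg c hc, h]
    · intro z hz
      rw [← himg] at hz
      simpa using hz
    · intro b hb
      simp only [Finset.mem_filter, Finset.mem_univ, true_and] at hb
      rw [hg b hb]

section
variable {X : Type} [Fintype X] [DecidableEq X] (op : X → X → X)

noncomputable def chR (n k : ℕ) (e : Fin (n + 1)) : RackChain X (n + 1) →+ RackChain X (n + 1) :=
  FreeAbelianGroup.lift fun x => FreeAbelianGroup.of (repl (n + 1) k (x e) x)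

noncomputable def chS (n k : ℕ) : RackChain X (n + 1) →+ RackChain X (n + 1) :=
  FreeAbelianGroup.lift fun x => ∑ y : X, FreeAbelianGroup.of (repl (n + 1) k y x)

noncomputable def chT (n k : ℕ) (e : Fin (n + 1)) : RackChain X (n + 1) →+ RackChain X (n + 1) :=
  FreeAbelianGroup.lift fun x => ∑ y ∈ Finset.univ.filter (fun y => op (x e) y = x e),
    FreeAbelianGroup.of (repl (n + 1) k y x)

lemma rel_one (m : ℕ)
    (hidem : ∀ a : X, op a a = a)
    (hbij : ∀ b : X, Function.Bijective fun x => op x b)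
    (hstab : ∀ a : X, (Finset.univ.filter fun x => op a x = a).card = m)
    (hsol : ∀ a b : X, op a b ≠ a → ∃! x : X, op a x = b)
    (n k : ℕ) (e : Fin (n + 1)) (hk : k ≤ n + 1)
    (hek : (e : ℕ) = k ∨ (e : ℕ) + 1 = k)
    (w : RackChain X (n + 1)) (hw : rackBoundary op n w = 0) :
    (Fintype.card X : ℤ) • chR n k e w - ((m : ℤ) • chR n k e w + (chS n k w - chT op n k e w))
      ∈ (rackBoundary op (n + 1)).range := by
  have h := homotopy_cycle op hidem hbij
    (fun a => ({a} : Finset X) ×ˢ (Finset.univ : Finset X))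
    (by
      intro a c y z
      simp only [Finset.mem_product, Finset.mem_singleton, Finset.mem_univ, and_true]
      exact ((hbij c).1.eq_iff (a := y) (b := a)).symm) n k e hk hek w hw
  convert h using 1
  have : (Fintype.card X : ℤ) • chR n k e - ((m : ℤ) • chR n k e + (chS n k - chT op n k e))
      = FreeAbelianGroup.lift (fun x : Fin (n + 1) → X =>
        ∑ p ∈ ({x e} : Finset X) ×ˢ (Finset.univ : Finset X),
        (FreeAbelianGroup.of (repl (n + 1) k p.1 x)
        - FreeAbelianGroup.of (repl (n + 1) k (op p.1 p.2) x))) := by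
    ext x
    simp only [AddMonoidHom.sub_apply, AddMonoidHom.add_apply, AddMonoidHom.zsmul_apply, chR, chS,
      chT, FreeAbelianGroup.lift_apply_of, Finset.sum_product, Finset.sum_singleton,
      Finset.sum_sub_distrib]
    rw [left_sum op m hidem hstab hsol
      (fun v => FreeAbelianGroup.of (repl (n + 1) k v x)) (x e)]
    simp
  exact DFunLike.congr_fun this w

lemma rel_two (m : ℕ)
    (hidem : ∀ a : X, op a a = a)
    (hbij : ∀ b : X, Function.Bijective fun x => op x b)
    (hdist : ∀ a b c : X, op (op a b) c = op (op a c) (op b c))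
    (hstab : ∀ a : X, (Finset.univ.filter fun x => op a x = a).card = m)
    (hsol : ∀ a b : X, op a b ≠ a → ∃! x : X, op a x = b)
    (htriv : ∀ a x y : X, op a x = a → op a y = a → op x y = x)
    (n k : ℕ) (e : Fin (n + 1)) (hk : k ≤ n + 1)
    (hek : (e : ℕ) = k ∨ (e : ℕ) + 1 = k)
    (w : RackChain X (n + 1)) (hw : rackBoundary op n w = 0) :
    (Fintype.card X : ℤ) • chT op n k e w - (m : ℤ) • chS n k w
      ∈ (rackBoundary op (n + 1)).range := by
  have h := homotopy_cycle op hidem hbij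
    (fun a => (Finset.univ.filter (fun y => op a y = a)) ×ˢ (Finset.univ : Finset X))
    (by
      intro a c y z
      simp only [Finset.mem_product, Finset.mem_filter, Finset.mem_univ, and_true, true_and]
      rw [← hdist]
      exact ((hbij c).1.eq_iff (a := op a y) (b := a)).symm) n k e hk hek w hw
  convert h using 1
  have : (Fintype.card X : ℤ) • chT op n k e - (m : ℤ) • chS n k
      = FreeAbelianGroup.lift (fun x : Fin (n + 1) → X =>
        ∑ p ∈ (Finset.univ.filter (fun y => op (x e) y = x e)) ×ˢ (Finset.univ : Finset X),
        (FreeAbelianGroup.of (repl (n + 1) k p.1 x)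
        - FreeAbelianGroup.of (repl (n + 1) k (op p.1 p.2) x))) := by
    ext x
    simp only [AddMonoidHom.sub_apply, AddMonoidHom.zsmul_apply, chS,
      chT, FreeAbelianGroup.lift_apply_of, Finset.sum_product, 
      Finset.sum_sub_distrib]
    rw [Finset.sum_congr rfl (s₁ := Finset.univ.filter (fun y => op (x e) y = x e))
      (f := fun y => ∑ z, FreeAbelianGroup.of (repl (n + 1) k (op y z) x))
      (g := fun y => m • FreeAbelianGroup.of (repl (n + 1) k y x)
        + (∑ v, FreeAbelianGroup.of (repl (n + 1) k v x)
          - ∑ v ∈ Finset.univ.filter (fun y => op (x e) y = x e),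
            FreeAbelianGroup.of (repl (n + 1) k v x)))]
    · rw [Finset.sum_add_distrib, Finset.sum_const, hstab, ← Finset.smul_sum]
      simp only [Finset.sum_const, Finset.card_univ, ← Finset.smul_sum, natCast_zsmul]
      module
    · intro y hy
      have hy := (Finset.mem_filter.1 hy).2
      rw [left_sum op m hidem hstab hsol
        (fun v => FreeAbelianGroup.of (repl (n + 1) k v x)) y]
      have : (Finset.univ.filter fun v => op y v = y)
          = Finset.univ.filter (fun v => op (x e) v = x e) := by
        ext v
        simp only [Finset.mem_filter, Finset.mem_univ, true_and]
        constructor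
        · intro hv
          exact htriv y (x e) v (htriv (x e) y (x e) hy (hidem _)) hv
        · intro hv
          exact htriv (x e) y v hy hv
      rw [this]
  exact DFunLike.congr_fun this w

end

/-- For a finite `m`-almost quasigroup quandle `X` all of whose
stabilizers are trivial subquandles, the torsion subgroup of every rack
homology group `H_n^R(X)` (`n ≥ 1`) is annihilated by
`N = m · lcm(|X|, |X| - m)`. -/
theorem mAQ_trivial_stabilizers_torsion_annihilated
    {X : Type} [Fintype X] [DecidableEq X] (op : X → X → X) (m : ℕ)
    (hm : 1 ≤ m)
    (hidem : ∀ a : X, op a a = a)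
    (hbij : ∀ b : X, Function.Bijective fun x => op x b)
    (hdist : ∀ a b c : X, op (op a b) c = op (op a c) (op b c))
    (hstab : ∀ a : X, (Finset.univ.filter fun x => op a x = a).card = m)
    (hsol : ∀ a b : X, op a b ≠ a → ∃! x : X, op a x = b)
    (htriv : ∀ a x y : X, op a x = a → op a y = a → op x y = x) :
    ∀ n : ℕ, ∀ h : rackHomology op n,
      (∃ k : ℕ, k ≠ 0 ∧ k • h = 0) →
        (m * Nat.lcm (Fintype.card X) (Fintype.card X - m)) • h = 0 := by
  intro n h hk
  obtain ⟨w, rfl⟩ := QuotientAddGroup.mk_surjective h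
  obtain ⟨c, hc0, hc⟩ := hk
  obtain ⟨w, hw⟩ := w
  have hw' : rackBoundary op n w = 0 := hw
  have tors : ∀ c : ℕ, (c • (QuotientAddGroup.mk ⟨w, hw⟩ : rackHomology op n) = 0 ↔
      c • w ∈ (rackBoundary op (n + 1)).range) := by
    intro c
    exact QuotientAddGroup.eq_zero_iff (N := rackBoundaries op n)
      (c • (⟨w, hw⟩ : rackCycles op n))
  have hc' := (tors c).1 hc
  refine (tors _).2 ?_
  -- augmentation vanishes
  have haug : aug (n + 1) w = 0 := by
    obtain ⟨v, hv⟩ := hc'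
    have := aug_boundary op (n + 1) v
    rw [hv, map_nsmul] at this
    simpa [hc0] using this
  have hSn : chS n (n + 1) w = 0 := by
    have : chS n (n + 1) = ((zmultiplesHom (RackChain X (n + 1)))
        (∑ y : X, FreeAbelianGroup.of (fun _ => y))).comp (aug (n + 1)) := by
      ext x
      simp only [chS, aug, AddMonoidHom.comp_apply, FreeAbelianGroup.lift_apply_of,
        zmultiplesHom_apply, one_smul]
      refine Finset.sum_congr rfl fun y _ => ?_
      congr 1
      funext t
      simp [repl]
      omega
    rw [this, AddMonoidHom.comp_apply, haug, map_zero]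
  have hR0 : chR n 0 0 w = w := by
    have : chR (X := X) n 0 0 = AddMonoidHom.id _ := by
      ext x
      simp only [chR, FreeAbelianGroup.lift_apply_of, AddMonoidHom.id_apply]
      congr 1
    rw [this]; rfl
  have hRs : ∀ e : Fin (n + 1), chR (X := X) n ((e : ℕ) + 1) e = chR n e e := by
    intro e
    ext x
    simp only [chR, FreeAbelianGroup.lift_apply_of]
    congr 1
    funext t
    simp only [repl]
    split_ifs with h1 h2 h2
    · rfl
    · have : t = e := Fin.ext (by omega)
      rw [this]
    · omega
    · rfl
  rcases isEmpty_or_nonempty X with hX | ⟨⟨a0⟩⟩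
  · simp
  have hmle : m ≤ Fintype.card X := by
    rw [← hstab a0]
    exact Finset.card_le_univ _
  obtain ⟨q, hq⟩ := Nat.dvd_lcm_left (Fintype.card X) (Fintype.card X - m)
  obtain ⟨p, hp⟩ := Nat.dvd_lcm_right (Fintype.card X) (Fintype.card X - m)
  set L := Nat.lcm (Fintype.card X) (Fintype.card X - m) with hL
  have hq' : (L : ℤ) = Fintype.card X * q := by rw [hq]; push_cast; ring
  have hp' : (L : ℤ) = (Fintype.card X - m) * p := by rw [hp]; push_cast [hmle]; ring
  obtain ⟨C, hC⟩ : ∃ C : ℤ, C = (Fintype.card X : ℤ) := ⟨_, rfl⟩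
  rw [← hC] at hq' hp'
  let π := QuotientAddGroup.mk' (rackBoundary op (n + 1)).range
  have hπ : ∀ v, v ∈ (rackBoundary op (n + 1)).range ↔ π v = 0 :=
    fun v => (QuotientAddGroup.eq_zero_iff v).symm
  have main : ∀ (k : ℕ) (e : Fin (n + 1)), k ≤ n + 1 → ((e : ℕ) = k ∨ (e : ℕ) + 1 = k) →
      ((m : ℤ) * L) • π (chR n k e w) = ((q : ℤ) * m) • π (chS n k w) := by
    intro k e hk hek
    have r1 := (hπ _).1 (rel_one op m hidem hbij hstab hsol n k e hk hek w hw')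
    have r2 := (hπ _).1 (rel_two op m hidem hbij hdist hstab hsol htriv n k e hk hek w hw')
    simp only [map_sub, map_add, map_zsmul, ← hC] at r1 r2
    have a1 : ((m : ℤ) * ((C - m) * p)) • π (chR n k e w)
        = ((C - m) * p) • π (chT op n k e w) := by
      linear_combination (norm := module) ((m : ℤ) * p) • r1 - (p : ℤ) • r2
    have a2 : (C * q) • π (chT op n k e w) = ((q : ℤ) * m) • π (chS n k w) := by
      linear_combination (norm := module) (q : ℤ) • r2
    rw [hp', a1, ← hp', hq', a2]
  have all : ∀ e : ℕ, (he : e < n + 1) →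
      ((m : ℤ) * L) • π (chR n e ⟨e, he⟩ w) = ((m : ℤ) * L) • π w := by
    intro e
    induction e with
    | zero => intro he; exact congrArg (fun v => ((m : ℤ) * L) • π v) hR0
    | succ e ih =>
      intro he
      have he' : e < n + 1 := by omega
      have b1 := main (e + 1) ⟨e + 1, he⟩ (by omega) (Or.inl rfl)
      have b2 := main (e + 1) ⟨e, he'⟩ (by omega) (Or.inr rfl)
      rw [b1, ← b2, ← ih he']
      exact congrArg (fun f => ((m : ℤ) * L) • π (f w)) (hRs ⟨e, he'⟩)
  have b := main (n + 1) ⟨n, by omega⟩ le_rfl (Or.inr rfl)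
  have b' := all n (by omega)
  rw [hSn, map_zero, smul_zero] at b
  rw [hπ, map_nsmul, ← natCast_zsmul, Nat.cast_mul, ← b', ← b]
  exact congrArg (fun f => ((m : ℤ) * L) • π (f w)) (hRs ⟨n, by omega⟩).symm
end
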